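/- Let Ω be a compact metric space such that the Banach space C(Ω, ℝ) is infinite-dimensional and not isomorphic to c₀. Then C(Ω, ℝ) has the ω-SVM property but does not have the ω₁-SVM property; that is, there is a finite constant working for all finite set algebras, but there is no finite constant v such that for every countable set algebra F and every 1-additive ν : F → C(Ω, ℝ) there is a vector measure μ : F → C(Ω, ℝ) with ‖ν(A) − μ(A)‖ ≤ v for all A ∈ F. -/

import Mathlib

/-!
`C(K)` has the `ω`-SVM property. By the Kalton–Roberts theorem (`kalton_roberts`) each
`A ↦ ν A x` is uniformly close to a measure; finitely many of these measures are glued with a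
partition of unity of `K` (`powerset_svm`), which suffices as a finite algebra involves only
finitely many functions `ν A`. The Kalton–Roberts theorem itself rests on concentrators: a sparse
bipartite graph (`exists_concentrator`) allows many sets of low overlap to be cut and reassembled
into half as many sets at small cost, which bounds the error of a best affine approximation
(`exists_affine_approx`).

`C(K)` fails the `ω₁`-SVM property. If some finite Cantor–Bendixson derivative of `K` is empty,
then `C(K)` is isomorphic to `c₀(Γ)` with `Γ` countable, by repeatedly splitting off the isolated
points (`exists_splitting`); so under the hypotheses all finite derivatives of `K` are nonempty
(`cbDeriv_nonempty`). Hence for each `n` there is a tree of bump functions `φ s` on `K`, indexed by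
finite lists of naturals, with siblings disjointly supported, children supported where the parent
equals `1`, and centres of children converging to the centre of the parent down to level `n`
(`exists_bumpTree`). For a finite set `A` of nodes let `g A` be half the sum of
`(-1) ^ k φ (k :: s)` over `s ∈ A` and `k` below a cutoff exceeding all entries of members of `A`.
Children beyond the cutoff are disjointly supported, so `g` is `1`-additive; it extends to the
countable algebra of finite and cofinite sets of nodes. A vector measure near `g` is given on
singletons by continuous functions `h t`. Continuity allows one to descend a branch of length `n`
always choosing the parity of the next child against the sign of `h t` (`exists_branch`). On the
part of the branch with a given parity `g` is then larger than the measure by an amount growing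
linearly in the number of nodes, and `n` was arbitrary.
-/

open Cardinal ENNReal

/-- A set algebra: contains `∅`, closed under complements and finite unions. -/
def IsSetAlg {Ω : Type*} (F : Set (Set Ω)) : Prop :=
  ∅ ∈ F ∧ (∀ A ∈ F, Aᶜ ∈ F) ∧ ∀ A ∈ F, ∀ B ∈ F, A ∪ B ∈ F

/-- `ν` is 1-additive on the set algebra `F`. -/
def OneAdd {Ω X : Type*} [SeminormedAddCommGroup X] (F : Set (Set Ω)) (ν : Set Ω → X) : Prop :=
  ∀ A ∈ F, ∀ B ∈ F, Disjoint A B → ‖ν (A ∪ B) - ν A - ν B‖ ≤ 1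

/-- `μ` is a (finitely additive) vector measure on the set algebra `F`. -/
def VectMeas {Ω X : Type*} [AddCommGroup X] (F : Set (Set Ω)) (μ : Set Ω → X) : Prop :=
  ∀ A ∈ F, ∀ B ∈ F, Disjoint A B → μ (A ∪ B) = μ A + μ B

/-- `K` is a Kalton–Roberts constant. -/
def IsKRConst (K : ℝ) : Prop :=
  ∀ (Ω : Type) (F : Set (Set Ω)), IsSetAlg F →
    ∀ ν : Set Ω → ℝ, OneAdd F ν →
      ∃ μ : Set Ω → ℝ, VectMeas F μ ∧ ∀ A ∈ F, |ν A - μ A| ≤ K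

/-- `X` has the SVM property with constant `v` (arbitrary set algebras). -/
def HasSVMBound (X : Type*) [SeminormedAddCommGroup X] (v : ℝ) : Prop :=
  ∀ (Ω : Type) (F : Set (Set Ω)), IsSetAlg F →
    ∀ ν : Set Ω → X, OneAdd F ν →
      ∃ μ : Set Ω → X, VectMeas F μ ∧ ∀ A ∈ F, ‖ν A - μ A‖ ≤ v

/-- `X` has the ω-SVM property with constant `v` (finite set algebras). -/
def HasOmegaSVMBound (X : Type*) [SeminormedAddCommGroup X] (v : ℝ) : Prop :=
  ∀ (Ω : Type) (F : Set (Set Ω)), IsSetAlg F → F.Finite →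
    ∀ ν : Set Ω → X, OneAdd F ν →
      ∃ μ : Set Ω → X, VectMeas F μ ∧ ∀ A ∈ F, ‖ν A - μ A‖ ≤ v

/-- `X` has the κ-SVM property with constant `v` (set algebras of cardinality `< κ`). -/
def HasKappaSVMBound (X : Type*) [SeminormedAddCommGroup X] (κ : Cardinal) (v : ℝ) : Prop :=
  ∀ (Ω : Type) (F : Set (Set Ω)), IsSetAlg F → #(↥F) < κ →
    ∀ ν : Set Ω → X, OneAdd F ν →
      ∃ μ : Set Ω → X, VectMeas F μ ∧ ∀ A ∈ F, ‖ν A - μ A‖ ≤ v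

/-! ### Concentrators -/

theorem pow_self_le_three_pow_mul_factorial (s : ℕ) : (s : ℝ) ^ s ≤ 3 ^ s * (s.factorial : ℝ) := by
  have h := Real.pow_div_factorial_le_exp (x := (s : ℝ)) (by positivity) s
  have h1 : Real.exp (s : ℝ) ≤ 3 ^ s := by
    have : Real.exp (s : ℝ) = Real.exp 1 ^ s := by rw [← Real.exp_nat_mul]; simp
    rw [this]
    exact pow_le_pow_left₀ (Real.exp_pos _).le Real.exp_one_lt_three.le _
  rw [div_le_iff₀ (by positivity)] at h
  exact h.trans (mul_le_mul_of_nonneg_right h1 (by positivity))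

theorem choose_mul_pow_self_le (m s : ℕ) : (m.choose s : ℝ) * (s : ℝ) ^ s ≤ (3 * m) ^ s := by
  have h1 := Nat.choose_le_pow_div (α := ℝ) s m
  have h2 := pow_self_le_three_pow_mul_factorial s
  have hf : (0 : ℝ) < s.factorial := by positivity
  calc (m.choose s : ℝ) * (s : ℝ) ^ s ≤ ((m : ℝ) ^ s / s.factorial) * (3 ^ s * s.factorial) := by gcongr
    _ = (3 * m) ^ s := by rw [mul_pow]; field_simp

/-- One term of the union bound in `exists_concentrator`: the left-hand side bounds the number of
`3`-regular graphs from `2 n` to `n` points in which some `s` vertices have all their neighbours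
among `s` points. -/
theorem concentrator_term_le (n s : ℕ) (hs : 64 * s ≤ n) :
    ((2 * n).choose s : ℝ) * (n.choose s) * ((s : ℝ) ^ (3 * s) * (n : ℝ) ^ (3 * (2 * n - s)))
      ≤ (9 / 32) ^ s * (n : ℝ) ^ (6 * n) := by
  have h1 := choose_mul_pow_self_le (2 * n) s
  have h2 := choose_mul_pow_self_le n s
  have hs' : (s : ℝ) ≤ n / 64 := by
    rw [le_div_iff₀ (by norm_num)]; exact_mod_cast (by omega : s * 64 ≤ n)
  calc ((2 * n).choose s : ℝ) * (n.choose s) * ((s : ℝ) ^ (3 * s) * (n : ℝ) ^ (3 * (2 * n - s)))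
      = (((2 * n).choose s : ℝ) * (s : ℝ) ^ s) * ((n.choose s) * (s : ℝ) ^ s) * (s : ℝ) ^ s
          * (n : ℝ) ^ (3 * (2 * n - s)) := by ring
    _ ≤ (3 * (2 * n : ℕ)) ^ s * (3 * n) ^ s * (n / 64 : ℝ) ^ s * (n : ℝ) ^ (3 * (2 * n - s)) := by
        gcongr
    _ = (9 / 32) ^ s * ((n : ℝ) ^ (3 * s) * (n : ℝ) ^ (3 * (2 * n - s))) := by
        rw [← mul_assoc, pow_mul (n : ℝ) 3 s, ← mul_pow, ← mul_pow, ← mul_pow]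
        congr 2; push_cast; ring
    _ = (9 / 32) ^ s * (n : ℝ) ^ (6 * n) := by
        rw [← pow_add]; congr 2; omega

/-- There is a bipartite multigraph from `2 n` to `n` vertices, of left degree `3`, in which every
set of at most `n / 64` left vertices satisfies Hall's condition. The graph is found by counting:
fewer than half of all graphs violate the condition. The left vertices are two copies of the right
ones, encoded as `ι × Bool`. -/
theorem exists_concentrator (ι : Type) [Fintype ι] [DecidableEq ι] [Nonempty ι] :
    ∃ h : ι × Bool → Fin 3 → ι, ∀ S : Finset (ι × Bool), 64 * S.card ≤ Fintype.card ι →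
      S.card ≤ (S.biUnion fun l => Finset.univ.image (h l)).card := by
  classical
  by_contra hcon
  push Not at hcon
  set n := Fintype.card ι with hn
  have hn0 : 0 < n := Fintype.card_pos
  let B : Finset (ι × Bool) → Finset ι → Finset (ι × Bool → Fin 3 → ι) := fun S T =>
    Fintype.piFinset fun l => Fintype.piFinset fun _ => if l ∈ S then T else Finset.univ
  have hB : ∀ s, ∀ S ∈ Finset.powersetCard s (Finset.univ : Finset (ι × Bool)),
      ∀ T ∈ Finset.powersetCard s (Finset.univ : Finset ι),
      (B S T).card = s ^ (3 * s) * n ^ (3 * (2 * n - s)) := by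
    intro s S hS T hT
    rw [Finset.mem_powersetCard] at hS hT
    have hcompl : (Finset.univ.filter fun l => l ∉ S).card = 2 * n - s := by
      have : (Finset.univ.filter fun l => l ∉ S) = Sᶜ := by ext; simp
      rw [this, Finset.card_compl, hS.2, Fintype.card_prod, Fintype.card_bool, mul_comm]
    simp only [B, Fintype.card_piFinset, Finset.prod_const, Finset.card_univ, Fintype.card_fin,
      apply_ite Finset.card, ite_pow]
    rw [Finset.prod_ite, Finset.prod_const, Finset.prod_const, hcompl]
    have : (Finset.univ.filter fun l => l ∈ S) = S := by ext; simp
    rw [this, hS.2, hT.2, ← pow_mul, ← pow_mul]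
  have hcover : (Finset.univ : Finset (ι × Bool → Fin 3 → ι)) ⊆
      (Finset.Icc 1 (n / 64)).biUnion fun s =>
        (Finset.powersetCard s Finset.univ).biUnion fun S =>
          (Finset.powersetCard s Finset.univ).biUnion fun T => B S T := by
    intro h _
    obtain ⟨S, hS, hlt⟩ := hcon h
    obtain ⟨T, hT1, hT2⟩ := Finset.exists_superset_card_eq
      (s := S.biUnion fun l => Finset.univ.image (h l)) (n := S.card) hlt.le (by omega)
    simp only [Finset.mem_biUnion, Finset.mem_powersetCard, Finset.mem_Icc]
    refine ⟨S.card, ⟨by omega, by omega⟩, S, ⟨Finset.subset_univ _, rfl⟩, T,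
      ⟨Finset.subset_univ _, hT2⟩, ?_⟩
    simp only [B, Fintype.mem_piFinset]
    intro l t
    split_ifs with hl
    · apply hT1
      simp only [Finset.mem_biUnion, Finset.mem_image, Finset.mem_univ, true_and]
      exact ⟨l, hl, t, rfl⟩
    · simp
  have hcard : n ^ (6 * n) ≤ ∑ s ∈ Finset.Icc 1 (n / 64),
      ((2 * n).choose s * n.choose s) * (s ^ (3 * s) * n ^ (3 * (2 * n - s))) := by
    calc n ^ (6 * n) = (Finset.univ : Finset (ι × Bool → Fin 3 → ι)).card := by
          simp only [Finset.card_univ, Fintype.card_fun, Fintype.card_fin, Fintype.card_prod,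
            Fintype.card_bool]
          rw [← pow_mul, ← hn]; congr 1; ring
      _ ≤ _ := Finset.card_le_card hcover
      _ ≤ _ := Finset.card_biUnion_le
      _ ≤ _ := by
        refine Finset.sum_le_sum fun s _ => ?_
        refine (Finset.card_biUnion_le_card_mul _ _
          (n.choose s * (s ^ (3 * s) * n ^ (3 * (2 * n - s)))) fun S hS => ?_).trans ?_
        · refine (Finset.card_biUnion_le_card_mul _ _ _
            fun T hT => (hB s S hS T hT).le).trans ?_
          rw [Finset.card_powersetCard, Finset.card_univ]
        · rw [Finset.card_powersetCard, Finset.card_univ, Fintype.card_prod, Fintype.card_bool,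
            ← hn, mul_comm n 2, mul_assoc]
  have hreal : (n : ℝ) ^ (6 * n) ≤ ∑ s ∈ Finset.Icc 1 (n / 64), (9 / 32 : ℝ) ^ s * (n : ℝ) ^ (6 * n) := by
    have : ((n ^ (6 * n) : ℕ) : ℝ) ≤ _ := Nat.cast_le.mpr hcard
    push_cast at this
    refine this.trans (Finset.sum_le_sum fun s hs => ?_)
    rw [Finset.mem_Icc] at hs
    exact concentrator_term_le n s (by omega)
  rw [← Finset.sum_mul] at hreal
  have hpos : (0 : ℝ) < (n : ℝ) ^ (6 * n) := by positivity
  have h1 : (1 : ℝ) ≤ ∑ s ∈ Finset.Icc 1 (n / 64), (9 / 32 : ℝ) ^ s := by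
    by_contra hc
    push Not at hc
    nlinarith
  have h2 : ∑ s ∈ Finset.Icc 1 (n / 64), (9 / 32 : ℝ) ^ s ≤ 9 / 23 := by
    have hsum : ∀ N : ℕ, ∑ s ∈ Finset.Icc 1 N, (9 / 32 : ℝ) ^ s = 9 / 23 - 9 / 23 * (9 / 32) ^ N := by
      intro N
      induction N with
      | zero => simp
      | succ N ih => rw [Finset.sum_Icc_succ_top (by omega), ih, pow_succ]; ring
    rw [hsum]
    have : (0 : ℝ) ≤ 9 / 23 * (9 / 32) ^ (n / 64) := by positivity
    linarith
  linarith

/-! ### The Kalton–Roberts theorem on a finite power set -/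

theorem abs_iUnion_sub_sum_le {Q κ : Type} [DecidableEq κ] (g : Set Q → ℝ) (h0 : g ∅ = 0)
    (hg : ∀ A B, Disjoint A B → |g (A ∪ B) - g A - g B| ≤ 2) (E : κ → Set Q) (S : Finset κ)
    (hE : ∀ s ∈ S, ∀ t ∈ S, s ≠ t → Disjoint (E s) (E t)) :
    |g (⋃ s ∈ S, E s) - ∑ s ∈ S, g (E s)| ≤ 2 * S.card := by
  induction S using Finset.induction_on with
  | empty => simp [h0]
  | insert a S ha ih =>
    have ih' := ih fun s hs t ht => hE s (Finset.mem_insert_of_mem hs) t (Finset.mem_insert_of_mem ht)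
    have hd : Disjoint (E a) (⋃ s ∈ S, E s) := by
      rw [Set.disjoint_iUnion₂_right]
      intro s hs
      exact hE a (Finset.mem_insert_self _ _) s (Finset.mem_insert_of_mem hs)
        (fun h => ha (h ▸ hs))
    have h1 := hg _ _ hd
    rw [Finset.set_biUnion_insert, Finset.sum_insert ha, Finset.card_insert_of_notMem ha]
    push_cast
    rw [abs_le] at *
    constructor <;> linarith [h1.1, h1.2, ih'.1, ih'.2]

/-- If every point lies in few of the `2 n` sets `A l`, then these can be cut into three pieces each
and the pieces reassembled disjointly into only `n` sets: piece `(l, k)` goes to the neighbour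
`h l k` of `l` in a concentrator, and Hall's theorem at each point makes the pieces with the same
destination disjoint. The error `2` of `g` is paid once per piece when cutting and once when
reassembling, `2 * (2 * 3 * 2 n) = 24 n` in total. -/
theorem exists_recombination {Q ι : Type} [Fintype ι] [DecidableEq ι] [Nonempty ι]
    (g : Set Q → ℝ) (h0 : g ∅ = 0)
    (hg : ∀ A B, Disjoint A B → |g (A ∪ B) - g A - g B| ≤ 2) (A : ι × Bool → Set Q)
    (S : Q → Finset (ι × Bool)) (hS : ∀ x l, l ∈ S x ↔ x ∈ A l)
    (hcard : ∀ x, 64 * (S x).card ≤ Fintype.card ι) :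
    ∃ C : ι → Set Q, ∑ l, g (A l) ≤ ∑ j, g (C j) + 24 * Fintype.card ι := by
  classical
  obtain ⟨h, hh⟩ := exists_concentrator ι
  -- Hall's theorem: each point `x` selects an edge at every `l` with `x ∈ A l`, injectively.
  have hmatch : ∀ x, ∃ t : ι × Bool → Fin 3, ∀ l ∈ S x, ∀ l' ∈ S x, h l (t l) = h l' (t l') → l = l' := by
    intro x
    have hall : ∀ T : Finset (S x), T.card ≤ (T.biUnion fun l => Finset.univ.image (h l)).card := by
      intro T
      have h1 : (T.map (Function.Embedding.subtype _)).card = T.card := Finset.card_map _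
      have h2 : T.map (Function.Embedding.subtype _) ⊆ S x := by
        intro l hl
        simp only [Finset.mem_map, Function.Embedding.subtype_apply] at hl
        obtain ⟨a, _, rfl⟩ := hl
        exact a.2
      have h3 := hh (T.map (Function.Embedding.subtype _)) (by
        have := Finset.card_le_card h2
        have := hcard x
        omega)
      rw [h1] at h3
      convert h3 using 2
      ext j; simp
    obtain ⟨m, hm1, hm2⟩ := (Finset.all_card_le_biUnion_card_iff_exists_injective _).1 hall
    have hm3 : ∀ l : S x, ∃ t, h l t = m l := fun l => by simpa using hm2 l
    choose t ht using hm3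
    refine ⟨fun l => if hl : l ∈ S x then t ⟨l, hl⟩ else 0, fun l hl l' hl' heq => ?_⟩
    simp only [hl, hl', dif_pos] at heq
    have e1 := ht ⟨l, hl⟩
    have e2 := ht ⟨l', hl'⟩
    simp only at e1 e2
    rw [e1, e2] at heq
    exact congrArg Subtype.val (hm1 heq)
  choose t ht using hmatch
  let E : (ι × Bool) × Fin 3 → Set Q := fun p => {x | x ∈ A p.1 ∧ t x p.1 = p.2}
  let P : ι → Finset ((ι × Bool) × Fin 3) := fun j => Finset.univ.filter fun p => h p.1 p.2 = j
  refine ⟨fun j => ⋃ p ∈ P j, E p, ?_⟩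
  have hA : ∀ l, g (A l) ≤ ∑ k, g (E (l, k)) + 6 := by
    intro l
    have h1 := abs_iUnion_sub_sum_le g h0 hg (fun k => E (l, k)) Finset.univ (by
      intro k _ k' _ hk
      rw [Set.disjoint_left]
      rintro x ⟨_, hx⟩ ⟨_, hx'⟩
      exact hk (hx.symm.trans hx'))
    have h2 : (⋃ k ∈ (Finset.univ : Finset (Fin 3)), E (l, k)) = A l := by
      ext x; simp [E]
    rw [h2] at h1
    simp only [Finset.card_univ, Fintype.card_fin] at h1
    rw [abs_le] at h1
    push_cast at h1
    linarith [h1.2]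
  have hC : ∀ j, ∑ p ∈ P j, g (E p) ≤ g (⋃ p ∈ P j, E p) + 2 * (P j).card := by
    intro j
    have h1 := abs_iUnion_sub_sum_le g h0 hg E (P j) (by
      rintro ⟨l, k⟩ hp ⟨l', k'⟩ hp' hne
      simp only [P, Finset.mem_filter, Finset.mem_univ, true_and] at hp hp'
      rw [Set.disjoint_left]
      rintro x ⟨hx1, hx2⟩ ⟨hx1', hx2'⟩
      simp only at hx1 hx2 hx1' hx2'
      have := ht x l ((hS _ _).2 hx1) l' ((hS _ _).2 hx1') (by rw [hx2, hx2', hp, hp'])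
      subst this
      exact hne (by rw [← hx2, ← hx2']))
    rw [abs_le] at h1
    linarith [h1.1]
  have hPsum : ∀ F : (ι × Bool) × Fin 3 → ℝ, ∑ j, ∑ p ∈ P j, F p = ∑ p, F p := fun F =>
    Finset.sum_fiberwise _ _ _
  have hPcard : ∑ j, ((P j).card : ℝ) = 6 * Fintype.card ι := by
    have := hPsum fun _ => 1
    simp only [Finset.sum_const, nsmul_eq_mul, mul_one, Finset.card_univ, Fintype.card_prod,
      Fintype.card_bool, Fintype.card_fin] at this
    rw [this]; push_cast; ring
  calc ∑ l, g (A l) ≤ ∑ l, (∑ k, g (E (l, k)) + 6) := Finset.sum_le_sum fun l _ => hA l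
    _ = ∑ p, g (E p) + 12 * Fintype.card ι := by
        rw [Finset.sum_add_distrib, Fintype.sum_prod_type (f := fun p => g (E p))]
        simp only [Finset.sum_const, nsmul_eq_mul, Finset.card_univ, Fintype.card_prod, Fintype.card_bool]
        push_cast; ring
    _ = ∑ j, ∑ p ∈ P j, g (E p) + 12 * Fintype.card ι := by rw [hPsum]
    _ ≤ ∑ j, (g (⋃ p ∈ P j, E p) + 2 * (P j).card) + 12 * Fintype.card ι := by
        gcongr with j; exact hC j
    _ = _ := by
        rw [Finset.sum_add_distrib, ← Finset.mul_sum, hPcard]; ring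

/-- Almost maximal sets of an almost modular function have almost maximal intersections. -/
theorem le_iInter_of_modular {Q : Type} (g : Set Q → ℝ) (M : ℝ) (hM : ∀ A, g A ≤ M)
    (hg : ∀ A B, |g (A ∪ B) + g (A ∩ B) - g A - g B| ≤ 2) (k : ℕ) (D : Fin (k + 1) → Set Q)
    (hD : ∀ t, M - 4 ≤ g (D t)) : M - 4 - 6 * k ≤ g (⋂ t, D t) := by
  induction k with
  | zero =>
    have h1 : (⋂ t, D t) = D 0 := by
      ext x
      rw [Set.mem_iInter]
      exact ⟨fun h => h 0, fun h t => by rwa [Subsingleton.elim (α := Fin 1) t 0]⟩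
    rw [h1]
    simpa using hD 0
  | succ k ih =>
    have h1 := ih (fun t => D t.succ) fun t => hD _
    have h2 : (⋂ t, D t) = D 0 ∩ ⋂ t : Fin (k + 1), D t.succ := by
      ext x; simp [Fin.forall_fin_succ (n := k + 1)]
    rw [h2]
    have h3 := hg (D 0) (⋂ t : Fin (k + 1), D t.succ)
    have h4 := hM (D 0 ∪ ⋂ t : Fin (k + 1), D t.succ)
    have h5 := hD 0
    rw [abs_le] at h3
    push_cast
    linarith [h3.1]

/-- The core of the Kalton–Roberts argument. Let `g` be almost modular, bounded by `M`, attaining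
`M` on the sets `A i` and `-M` on the sets `B j`, and let each point lie in at most half of the
differences `A i \ B j`. These differences are almost maximal for `g`, and so are all `7`-fold
intersections of them, while a point lies in at most the fraction `2 ^ (-7)` of the intersections.
Taking each intersection twice, `exists_recombination` turns the `2 n` resulting sets into `n` sets,
so that `2 n (M - 40) ≤ n M + 24 n` up to the value at `∅`, which bounds `M`. -/
theorem modular_bound {Q I J : Type} [Fintype I] [Fintype J] [Nonempty I] [Nonempty J]
    (g : Set Q → ℝ) (M : ℝ) (hM : ∀ A, |g A| ≤ M) (h0 : g ∅ ≤ 0)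
    (hg : ∀ A B, |g (A ∪ B) + g (A ∩ B) - g A - g B| ≤ 2)
    (A : I → Set Q) (B : J → Set Q) (hA : ∀ i, g (A i) = M) (hB : ∀ j, g (B j) = -M)
    (hcount : ∀ x, 2 * Nat.card {q : I × J // x ∈ A q.1 \ B q.2} ≤ Fintype.card (I × J)) :
    M ≤ 104 := by
  classical
  have hsub : ∀ q : I × J, M - 4 ≤ g (A q.1 \ B q.2) := by
    rintro ⟨i, j⟩
    have h1 := hg (A i \ B j) (A i ∩ B j)
    have h2 := hg (B j \ A i) (A i ∩ B j)
    rw [Set.sdiff_union_inter] at h1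
    rw [Set.inter_comm (A i), Set.sdiff_union_inter] at h2
    have e1 : A i \ B j ∩ (A i ∩ B j) = ∅ := by ext x; simp; tauto
    have e2 : B j \ A i ∩ (B j ∩ A i) = ∅ := by ext x; simp; tauto
    rw [e1, hA] at h1
    rw [e2, hB] at h2
    have h3 := hM (B j \ A i)
    rw [Set.inter_comm] at h1
    rw [abs_le] at h1 h2 h3
    simp only
    linarith [h1.1, h1.2, h2.1, h2.2, h3.1]
  have hM' : ∀ A, g A ≤ M := fun A => (abs_le.1 (hM A)).2
  let ι := Fin 7 → I × J
  let D : ι × Bool → Set Q := fun l => ⋂ t, A (l.1 t).1 \ B (l.1 t).2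
  have hD : ∀ l, M - 40 ≤ g (D l) := by
    intro l
    have := le_iInter_of_modular g M hM' hg 6 (fun t => A (l.1 t).1 \ B (l.1 t).2) fun t => hsub _
    norm_num at this ⊢
    linarith
  let S : Q → Finset (ι × Bool) := fun x => Finset.univ.filter fun l => x ∈ D l
  have hS : ∀ x, 64 * (S x).card ≤ Fintype.card ι := by
    intro x
    let c := (Finset.univ.filter fun q : I × J => x ∈ A q.1 \ B q.2)
    have hc : 2 * c.card ≤ Fintype.card (I × J) := by
      have := hcount x
      rwa [Nat.card_eq_fintype_card, Fintype.card_subtype] at this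
    have e : S x = (Fintype.piFinset fun _ : Fin 7 => c) ×ˢ (Finset.univ : Finset Bool) := by
      ext l
      simp [S, D, c, Fintype.mem_piFinset]
    rw [e, Finset.card_product, Fintype.card_piFinset]
    simp only [Finset.prod_const, Finset.card_univ, Fintype.card_fin, Fintype.card_bool]
    have : Fintype.card ι = Fintype.card (I × J) ^ 7 := by simp [ι]
    rw [this]
    calc 64 * (c.card ^ 7 * 2) = (2 * c.card) ^ 7 := by ring
      _ ≤ _ := Nat.pow_le_pow_left hc 7
  obtain ⟨C, hC⟩ := exists_recombination (fun A => g A - g ∅) (by simp) (by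
    intro A B hAB
    have := hg A B
    rw [hAB.inter_eq] at this
    convert this using 2; ring) D S (by simp [S]) hS
  have hn : (0 : ℝ) < Fintype.card ι := by exact_mod_cast Fintype.card_pos
  have h1 : (2 * Fintype.card ι : ℝ) * (M - 40 - g ∅) ≤ ∑ l, (g (D l) - g ∅) := by
    have := Finset.card_nsmul_le_sum (Finset.univ : Finset (ι × Bool)) (fun l => g (D l) - g ∅)
      (M - 40 - g ∅) fun l _ => by linarith [hD l]
    rw [Finset.card_univ, Fintype.card_prod, Fintype.card_bool, nsmul_eq_mul] at this
    push_cast at this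
    linarith
  have h2 : ∑ j, (g (C j) - g ∅) ≤ Fintype.card ι * (M - g ∅) := by
    have := Finset.sum_le_card_nsmul (Finset.univ : Finset ι) (fun j => g (C j) - g ∅)
      (M - g ∅) fun j _ => by linarith [hM' (C j)]
    rwa [Finset.card_univ, nsmul_eq_mul] at this
  have h3 : (Fintype.card ι : ℝ) * (M - 104 - g ∅) ≤ 0 := by nlinarith
  have h4 : M - 104 - g ∅ ≤ 0 := by
    by_contra hc
    push Not at hc
    nlinarith
  linarith

/-- A convex combination of indicator functions is approximated, up to `1 / 8`, by the average of a
finite family with repetitions: round `N w i` up to an integer multiplicity. -/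
theorem exists_uniform_family {Q κ : Type} [Fintype κ] (w : κ → ℝ) (hw0 : ∀ i, 0 ≤ w i)
    (hw1 : ∑ i, w i = 1) (A : κ → Set Q) (c : Q → ℝ)
    (hc : ∑ i, w i • (A i).indicator (1 : Q → ℝ) = c) :
    ∃ (I : Type) (_ : Fintype I) (_ : Nonempty I) (e : I → κ), ∀ x,
      (Nat.card {i : I // x ∈ A (e i)} : ℝ) ≤ (c x + 1 / 8) * Fintype.card I ∧
      (Nat.card {i : I // x ∉ A (e i)} : ℝ) ≤ (1 - c x + 1 / 8) * Fintype.card I := by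
  classical
  let N : ℕ := 8 * Fintype.card κ + 1
  let n : κ → ℕ := fun i => ⌈N * w i⌉₊
  have hN : (0 : ℝ) < N := by positivity
  have hn1 : ∀ i, (N : ℝ) * w i ≤ n i := fun i => Nat.le_ceil _
  have hn2 : ∀ i, (n i : ℝ) ≤ N * w i + 1 := fun i =>
    (Nat.ceil_lt_add_one (mul_nonneg hN.le (hw0 i))).le
  have hcardI : (N : ℝ) ≤ Fintype.card (Σ i, Fin (n i)) := by
    rw [Fintype.card_sigma]
    simp only [Fintype.card_fin]
    push_cast
    calc (N : ℝ) = ∑ i, N * w i := by rw [← Finset.mul_sum, hw1, mul_one]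
      _ ≤ _ := Finset.sum_le_sum fun i _ => hn1 i
  let W : (κ → Prop) → ℝ := fun p => ∑ i, if p i then w i else 0
  -- the number of indices lying over a subset of `κ` exceeds the expected one by at most `N / 8`
  have key : ∀ p : κ → Prop, (Nat.card {i : Σ i, Fin (n i) // p i.1} : ℝ) ≤
      N * W p + N * (1 / 8) := by
    intro p
    have e1 : Nat.card {i : Σ i, Fin (n i) // p i.1} = ∑ i, if p i then n i else 0 := by
      rw [Nat.card_eq_fintype_card, Fintype.card_subtype, Finset.card_filter, Fintype.sum_sigma]
      refine Finset.sum_congr rfl fun i _ => ?_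
      simp only
      split_ifs <;> simp
    rw [e1]
    push_cast
    calc ∑ i, (if p i then (n i : ℝ) else 0) ≤ ∑ i, (N * (if p i then w i else 0) + 1) := by
          refine Finset.sum_le_sum fun i _ => ?_
          split_ifs
          · exact hn2 i
          · simp
      _ = N * W p + Fintype.card κ := by
          simp only [W]
          rw [Finset.sum_add_distrib, ← Finset.mul_sum]; simp
      _ ≤ _ := by
          have : (N : ℝ) = 8 * Fintype.card κ + 1 := by simp [N]
          gcongr
          rw [this]; linarith
  have hcx : ∀ x, c x = W fun i => x ∈ A i := by
    intro x
    rw [← hc, Finset.sum_apply]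
    refine Finset.sum_congr rfl fun i _ => ?_
    simp [Set.indicator_apply]
  have hcx' : ∀ x, 1 - c x = W fun i => x ∉ A i := by
    intro x
    rw [hcx, ← hw1, ← Finset.sum_sub_distrib]
    refine Finset.sum_congr rfl fun i _ => ?_
    simp only
    by_cases h : x ∈ A i <;> simp [h]
  have hnn : ∀ p : κ → Prop, 0 ≤ W p := fun p =>
    Finset.sum_nonneg fun i _ => by split_ifs <;> simp [hw0]
  refine ⟨Σ i, Fin (n i), inferInstance, ?_, fun i => i.1, fun x => ⟨?_, ?_⟩⟩
  · rw [← Fintype.card_pos_iff]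
    exact_mod_cast hN.trans_le hcardI
  · have h := key fun i => x ∈ A i
    rw [← hcx] at h
    have h' := hnn fun i => x ∈ A i
    rw [← hcx] at h'
    calc _ ≤ _ := h
      _ = (c x + 1 / 8) * N := by ring
      _ ≤ _ := by gcongr
  · have h := key fun i => x ∉ A i
    rw [← hcx'] at h
    have h' := hnn fun i => x ∉ A i
    rw [← hcx'] at h'
    calc _ ≤ _ := h
      _ = (1 - c x + 1 / 8) * N := by ring
      _ ≤ _ := by gcongr

/-- If the convex hulls of the sets where `g = M` and where `g = -M` have a common point `c`, then
a point `x` lies in a fraction of about `c x * (1 - c x) ≤ 1 / 4` of the differences, and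
`modular_bound` applies. -/
theorem modular_bound_of_convexHull {Q : Type}
    (g : Set Q → ℝ) (M : ℝ) (hM : ∀ A, |g A| ≤ M) (h0 : g ∅ ≤ 0)
    (hg : ∀ A B, |g (A ∪ B) + g (A ∩ B) - g A - g B| ≤ 2) (c : Q → ℝ)
    (hP : c ∈ convexHull ℝ ((fun A : Set Q => A.indicator (1 : Q → ℝ)) '' {A | g A = M}))
    (hN : c ∈ convexHull ℝ ((fun A : Set Q => A.indicator (1 : Q → ℝ)) '' {A | g A = -M})) :
    M ≤ 104 := by
  obtain ⟨κ, _, w, z, hw0, hw1, hz, hc⟩ := mem_convexHull_iff_exists_fintype.1 hP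
  obtain ⟨κ', _, w', z', hw0', hw1', hz', hc'⟩ := mem_convexHull_iff_exists_fintype.1 hN
  choose A hA hAz using hz
  choose B hB hBz using hz'
  obtain ⟨I, _, _, e, he⟩ := exists_uniform_family w hw0 hw1 A c (by rw [← hc]; simp [← hAz])
  obtain ⟨J, _, _, e', he'⟩ := exists_uniform_family w' hw0' hw1' B c (by rw [← hc']; simp [← hBz])
  refine modular_bound g M hM h0 hg (fun i => A (e i)) (fun j => B (e' j)) (fun i => hA _)
    (fun j => hB _) fun x => ?_
  have e1 : Nat.card {q : I × J // x ∈ A (e q.1) \ B (e' q.2)}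
      = Nat.card {i : I // x ∈ A (e i)} * Nat.card {j : J // x ∉ B (e' j)} := by
    rw [← Nat.card_prod]
    exact Nat.card_congr (Equiv.subtypeProdEquivProd (p := fun i => x ∈ A (e i))
      (q := fun j => x ∉ B (e' j)))
  rw [e1, Fintype.card_prod]
  have h1 := (he x).1
  have h2 := (he' x).2
  set a := Nat.card {i : I // x ∈ A (e i)}
  set b := Nat.card {j : J // x ∉ B (e' j)}
  have hI : (0 : ℝ) < Fintype.card I := by exact_mod_cast Fintype.card_pos
  have hJ : (0 : ℝ) < Fintype.card J := by exact_mod_cast Fintype.card_pos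
  have h3 : (a : ℝ) * b ≤ ((c x + 1 / 8) * Fintype.card I) * ((1 - c x + 1 / 8) * Fintype.card J) :=
    mul_le_mul h1 h2 (by positivity) ((by positivity : (0 : ℝ) ≤ a).trans h1)
  have h4 : 2 * ((c x + 1 / 8) * (1 - c x + 1 / 8)) ≤ 1 := by nlinarith [sq_nonneg (c x - 1 / 2)]
  have h5 : (2 * ((c x + 1 / 8) * (1 - c x + 1 / 8))) * (Fintype.card I * Fintype.card J : ℝ)
      ≤ 1 * (Fintype.card I * Fintype.card J : ℝ) := by gcongr
  have h6 : (2 * (a * b) : ℝ) ≤ Fintype.card I * Fintype.card J := by nlinarith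
  exact_mod_cast h6

/-- The linear parametrization `(a, φ) ↦ (A ↦ a + φ 1_A)` of the affine set functions, the constants
plus the signed measures. -/
noncomputable def affineFun (Q : Type) : (ℝ × Module.Dual ℝ (Q → ℝ)) →ₗ[ℝ] (Set Q → ℝ) where
  toFun p := fun A => p.1 + p.2 (A.indicator 1)
  map_add' p q := by ext A; simp; ring
  map_smul' r p := by ext A; simp; ring

/-- An almost modular set function is within `104` of an affine one. For a best affine approximation
with error `M`, the convex hulls of the sets where the difference is `M` and where it is `-M`
intersect, since a separating functional would improve the approximation; then
`modular_bound_of_convexHull` gives `M ≤ 104`. -/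
theorem exists_affine_approx {Q : Type} [Finite Q] (f : Set Q → ℝ)
    (hf : ∀ A B, |f (A ∪ B) + f (A ∩ B) - f A - f B| ≤ 2) :
    ∃ (a : ℝ) (φ : Module.Dual ℝ (Q → ℝ)), ∀ A, |f A - (a + φ (A.indicator 1))| ≤ 104 := by
  classical
  have : Fintype Q := Fintype.ofFinite Q
  obtain ⟨y, ⟨p, rfl⟩, hy⟩ := (Submodule.closed_of_finiteDimensional
    (LinearMap.range (affineFun Q))).exists_infDist_eq_dist ⟨0, Submodule.zero_mem _⟩ f
  set g : Set Q → ℝ := f - affineFun Q p with hgdef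
  set M := ‖g‖ with hMdef
  have hmin : ∀ q, M ≤ ‖g - affineFun Q q‖ := by
    intro q
    have h1 : M = Metric.infDist f (LinearMap.range (affineFun Q)) := by
      rw [hy, dist_eq_norm]
    rw [h1]
    refine (Metric.infDist_le_dist_of_mem (LinearMap.mem_range_self (affineFun Q) (p + q))).trans ?_
    rw [dist_eq_norm, map_add, hgdef, sub_sub]
  have hgM : ∀ A, |g A| ≤ M := fun A => norm_le_pi_norm g A
  have hgmod : ∀ A B, |g (A ∪ B) + g (A ∩ B) - g A - g B| ≤ 2 := by
    intro A B
    have h1 : (A ∪ B).indicator (1 : Q → ℝ) + (A ∩ B).indicator 1 = A.indicator 1 + B.indicator 1 :=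
      Set.indicator_union_add_inter _ _ _
    have h2 := congrArg p.2 h1
    rw [map_add, map_add] at h2
    convert hf A B using 2
    simp only [hgdef, affineFun, LinearMap.coe_mk, AddHom.coe_mk, Pi.sub_apply]
    linarith
  suffices hM : M ≤ 104 by
    refine ⟨p.1, p.2, fun A => (hgM A).trans hM⟩
  by_contra hM
  push Not at hM
  have hMpos : 0 < M := by linarith
  set ind : Set Q → (Q → ℝ) := fun A => A.indicator 1 with hind
  have hfin : ∀ s : Set (Set Q), (ind '' s).Finite := fun s => (Set.toFinite s).image _
  have hne : ¬ Disjoint (convexHull ℝ (ind '' {A | g A = M})) (convexHull ℝ (ind '' {A | g A = -M})) := by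
    intro hdisj
    obtain ⟨φ, u, v, h1, huv, h2⟩ := geometric_hahn_banach_compact_closed (convex_convexHull ℝ _)
      ((hfin _).isCompact_convexHull ℝ) (convex_convexHull ℝ _)
      ((hfin _).isCompact_convexHull ℝ).isClosed hdisj
    -- moving slightly in the separating direction would improve the best approximation
    let ψ : Set Q → ℝ := affineFun Q (-u, (φ : (Q → ℝ) →ₗ[ℝ] ℝ))
    have hψ : ∀ A, ψ A = φ (ind A) - u := fun A => by
      simp only [ψ, affineFun, LinearMap.coe_mk, AddHom.coe_mk, hind, ContinuousLinearMap.coe_coe]; ring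
    have hev : ∀ᶠ t in nhdsWithin (0 : ℝ) (Set.Ioi 0), ∀ A, |g A + t * ψ A| < M := by
      rw [Filter.eventually_all]
      intro A
      have hcont : ∀ᶠ t in nhdsWithin (0 : ℝ) (Set.Ioi 0), |t * ψ A| < M ∧ |g A + t * ψ A| < |g A| + M := by
        have c1 : Filter.Tendsto (fun t : ℝ => |t * ψ A|) (nhdsWithin 0 (Set.Ioi 0)) (nhds |0 * ψ A|) :=
          (Continuous.tendsto (by fun_prop) 0).mono_left nhdsWithin_le_nhds
        have c2 : Filter.Tendsto (fun t : ℝ => |g A + t * ψ A|) (nhdsWithin 0 (Set.Ioi 0))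
            (nhds |g A + 0 * ψ A|) :=
          (Continuous.tendsto (by fun_prop) 0).mono_left nhdsWithin_le_nhds
        exact (c1.eventually_lt_const (by simpa using hMpos)).and
          (c2.eventually_lt_const (by simpa using hMpos))
      rcases (hgM A).lt_or_eq with hlt | heq
      · have c2 : Filter.Tendsto (fun t : ℝ => |g A + t * ψ A|) (nhdsWithin 0 (Set.Ioi 0))
            (nhds |g A + 0 * ψ A|) :=
          (Continuous.tendsto (by fun_prop) 0).mono_left nhdsWithin_le_nhds
        exact c2.eventually_lt_const (by simpa using hlt)
      · filter_upwards [hcont, self_mem_nhdsWithin] with t ht ht0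
        have ht0 : 0 < t := ht0
        have h3 := abs_lt.1 ht.1
        rcases eq_or_eq_neg_of_abs_eq heq with hA | hA
        · have h4 : ψ A < 0 := by
            rw [hψ]; linarith [h1 (ind A) (subset_convexHull ℝ _ ⟨A, hA, rfl⟩)]
          have h5 : t * ψ A < 0 := mul_neg_of_pos_of_neg ht0 h4
          rw [abs_lt, hA]
          constructor <;> linarith [h3.1]
        · have h4 : 0 < ψ A := by
            rw [hψ]; linarith [h2 (ind A) (subset_convexHull ℝ _ ⟨A, hA, rfl⟩)]
          have h5 : 0 < t * ψ A := mul_pos ht0 h4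
          rw [abs_lt, hA]
          constructor <;> linarith [h3.2]
    obtain ⟨t, ht⟩ := hev.exists
    have h3 := hmin ((-t) • (-u, (φ : (Q → ℝ) →ₗ[ℝ] ℝ)))
    have h4 : ‖g - affineFun Q ((-t) • (-u, (φ : (Q → ℝ) →ₗ[ℝ] ℝ)))‖ < M := by
      rw [pi_norm_lt_iff hMpos]
      intro A
      rw [map_smul]
      simpa [ψ] using ht A
    exact absurd h3 (not_le.2 h4)
  obtain ⟨c, hc1, hc2⟩ := Set.not_disjoint_iff.1 hne
  apply absurd _ (not_le.2 hM)
  rcases le_total (g ∅) 0 with h0 | h0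
  · exact modular_bound_of_convexHull g M hgM h0 hgmod c hc1 hc2
  · refine modular_bound_of_convexHull (-g) M (fun A => by simpa using hgM A) (by simpa using h0)
      (fun A B => ?_) c ?_ ?_
    · rw [← abs_neg]
      convert hgmod A B using 2
      simp only [Pi.neg_apply]; ring
    · simpa [neg_eq_iff_eq_neg] using hc2
    · simpa using hc1

/-- The Kalton–Roberts theorem for the power set of a finite set. A `1`-additive function is almost
modular with constant `2`, so it is within `104` of an affine function `a + μ`; the constant `a` is
within `105` of `0` because `|f ∅| ≤ 1`. -/
theorem kalton_roberts {Q : Type} [Finite Q] (f : Set Q → ℝ)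
    (hf : ∀ A B, Disjoint A B → |f (A ∪ B) - f A - f B| ≤ 1) :
    ∃ μ : Set Q → ℝ, (∀ A B, Disjoint A B → μ (A ∪ B) = μ A + μ B) ∧ ∀ A, |f A - μ A| ≤ 209 := by
  obtain ⟨a, φ, h⟩ := exists_affine_approx f (fun A B => by
    have h1 := hf A (B \ A) Set.disjoint_sdiff_right
    have h2 := hf (A ∩ B) (B \ A) (Set.disjoint_sdiff_right.mono_left Set.inter_subset_left)
    rw [Set.union_sdiff_self] at h1
    rw [Set.inter_comm A, Set.inter_union_sdiff] at h2
    rw [Set.inter_comm A]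
    rw [abs_le] at *
    constructor <;> linarith [h1.1, h1.2, h2.1, h2.2])
  refine ⟨fun A => φ (A.indicator 1), fun A B hAB => ?_, fun A => ?_⟩
  · simp only
    rw [Set.indicator_union_of_disjoint hAB, ← map_add]
    rfl
  · have h1 := hf ∅ ∅ (Set.disjoint_empty _)
    have h2 := h ∅
    have h3 := h A
    simp only [Set.union_empty, Set.indicator_empty] at h1 h2
    have h4 : φ (fun _ => (0 : ℝ)) = 0 := map_zero φ
    rw [h4] at h2
    rw [abs_le] at *
    constructor <;> linarith [h1.1, h1.2, h2.1, h2.2, h3.1, h3.2]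

/-! ### The `ω`-SVM property of `C(K)` -/

/-- The pointwise measures given by `kalton_roberts` at finitely many points of `K` are glued by a
partition of unity subordinate to a cover on whose members all `ν A` vary by less than `1`. -/
theorem powerset_svm {Q K : Type} [Finite Q] [MetricSpace K] [CompactSpace K]
    (ν : Set Q → ContinuousMap K ℝ)
    (hν : ∀ A B, Disjoint A B → ‖ν (A ∪ B) - ν A - ν B‖ ≤ 1) :
    ∃ μ : Set Q → ContinuousMap K ℝ, (∀ A B, Disjoint A B → μ (A ∪ B) = μ A + μ B) ∧
      ∀ A, ‖ν A - μ A‖ ≤ 210 := by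
  classical
  have hpt : ∀ x : K, ∃ m : Set Q → ℝ, (∀ A B, Disjoint A B → m (A ∪ B) = m A + m B) ∧
      ∀ A, |ν A x - m A| ≤ 209 := fun x =>
    kalton_roberts (fun A => ν A x) fun A B hAB =>
      ((ν (A ∪ B) - ν A - ν B).norm_coe_le_norm x).trans (hν A B hAB)
  choose m hm1 hm2 using hpt
  let U : K → Set K := fun x => {y | ∀ A, |ν A y - ν A x| < 1}
  have hUo : ∀ x, IsOpen (U x) := by
    intro x
    simp only [U, Set.ofPred_forall]
    exact isOpen_iInter_of_finite fun A => isOpen_lt (by fun_prop) continuous_const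
  obtain ⟨t, ht⟩ := isCompact_univ.elim_finite_subcover U hUo
    fun x _ => Set.mem_iUnion.2 ⟨x, fun A => by simp⟩
  obtain ⟨ρ, hρ⟩ := PartitionOfUnity.exists_isSubordinate (isClosed_univ (X := K))
    (fun i : t => U i) (fun i => hUo i) (fun y hy => by
      have := ht hy
      simp only [Set.mem_iUnion] at this ⊢
      obtain ⟨x, hx, hxy⟩ := this
      exact ⟨⟨x, hx⟩, hxy⟩)
  have hsum : ∀ y, ∑ i, ρ i y = 1 := fun y => by
    have := ρ.sum_eq_one (Set.mem_univ y)
    rwa [finsum_eq_sum_of_fintype] at this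
  refine ⟨fun A => ∑ i : t, m i A • ρ i, fun A B hAB => ?_, fun A => ?_⟩
  · simp only [hm1 _ A B hAB, add_smul, Finset.sum_add_distrib]
  · rw [ContinuousMap.norm_le _ (by norm_num)]
    intro y
    have e : (ν A - ∑ i : t, m i A • ρ i) y = ∑ i, ρ i y * (ν A y - m i A) := by
      simp only [mul_sub, Finset.sum_sub_distrib, ← Finset.sum_mul, hsum, one_mul]
      simp [ContinuousMap.sum_apply, mul_comm]
    rw [e, Real.norm_eq_abs]
    calc |∑ i, ρ i y * (ν A y - m i A)| ≤ ∑ i, |ρ i y * (ν A y - m i A)| :=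
          Finset.abs_sum_le_sum_abs _ _
      _ ≤ ∑ i, ρ i y * 210 := by
          refine Finset.sum_le_sum fun i _ => ?_
          rw [abs_mul, abs_of_nonneg (ρ.nonneg i y)]
          by_cases h0 : ρ i y = 0
          · simp [h0]
          · have hy : y ∈ U i := hρ i (subset_tsupport _ h0)
            have h1 := hy A
            have h2 := hm2 i A
            refine mul_le_mul_of_nonneg_left ?_ (ρ.nonneg i y)
            calc |ν A y - m i A| = |(ν A y - ν A i) + (ν A i - m i A)| := by congr 1; ring
              _ ≤ _ := abs_add_le _ _
              _ ≤ 210 := by linarith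
      _ = 210 := by rw [← Finset.sum_mul, hsum, one_mul]

theorem IsSetAlg.sUnion_mem {Ω : Type} {F : Set (Set Ω)} (hF : IsSetAlg F) {G : Set (Set Ω)}
    (hG : G.Finite) (hGF : G ⊆ F) : ⋃₀ G ∈ F := by
  induction G, hG using Set.Finite.induction_on with
  | empty => simpa using hF.1
  | insert _ _ ih =>
    rw [Set.sUnion_insert]
    exact hF.2.2 _ (hGF (Set.mem_insert _ _)) _ (ih fun x hx => hGF (Set.mem_insert_of_mem _ hx))

/-- A finite set algebra is the preimage of a power set under the map sending a point to its atom. -/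
theorem omega_svm (K : Type) [MetricSpace K] [CompactSpace K] :
    HasOmegaSVMBound (ContinuousMap K ℝ) 210 := by
  classical
  intro Ω F hF hfin ν hν
  -- points are classified by the members of `F` containing them; the atoms are the classes
  have : Finite F := hfin
  let π : Ω → Set F := fun x => {A | x ∈ A.1}
  have hmem : ∀ S : Set (Set F), π ⁻¹' S ∈ F := by
    intro S
    have hatom : ∀ x, π ⁻¹' {π x} ∈ F := by
      intro x
      let G : Set (Set Ω) := {B | B ∈ F ∧ x ∉ B}
      have hG : (⋃₀ G)ᶜ ∈ F := hF.2.1 _ (hF.sUnion_mem (hfin.subset fun B hB => hB.1) fun B hB => hB.1)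
      convert hG using 1
      ext y
      simp only [Set.mem_preimage, Set.mem_singleton_iff, Set.mem_compl_iff, Set.mem_sUnion, G,
        Set.mem_ofPred_eq, π]
      constructor
      · rintro h ⟨B, ⟨hB, hxB⟩, hyB⟩
        have := Set.ext_iff.1 h ⟨B, hB⟩
        exact hxB (this.1 hyB)
      · intro h
        ext ⟨B, hB⟩
        simp only [Set.mem_ofPred_eq]
        constructor
        · intro hy
          by_contra hx
          exact h ⟨B, ⟨hB, hx⟩, hy⟩
        · intro hx
          by_contra hy
          exact h ⟨Bᶜ, ⟨hF.2.1 _ hB, by simpa using hx⟩, hy⟩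
    have e : π ⁻¹' S = ⋃₀ ((fun s => π ⁻¹' {s}) '' (S ∩ Set.range π)) := by
      ext y
      simp only [Set.mem_preimage, Set.sUnion_image, Set.mem_iUnion, Set.mem_singleton_iff]
      constructor
      · intro h; exact ⟨π y, ⟨h, y, rfl⟩, rfl⟩
      · rintro ⟨s, hs, h⟩; rw [h]; exact hs.1
    rw [e]
    refine hF.sUnion_mem ((Set.toFinite _).image _) ?_
    rintro _ ⟨_, ⟨_, x, rfl⟩, rfl⟩
    exact hatom x
  obtain ⟨μ, hμ1, hμ2⟩ := powerset_svm (fun S : Set (Set F) => ν (π ⁻¹' S)) fun A B hAB => by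
    simp only [Set.preimage_union]
    exact hν _ (hmem A) _ (hmem B) (hAB.preimage π)
  have hpre : ∀ A ∈ F, π ⁻¹' (π '' A) = A := by
    intro A hA
    refine Set.Subset.antisymm ?_ (Set.subset_preimage_image _ _)
    rintro y ⟨x, hx, hxy⟩
    have : (⟨A, hA⟩ : F) ∈ π x := hx
    rw [hxy] at this
    exact this
  refine ⟨fun A => μ (π '' A), fun A hA B hB hAB => ?_, fun A hA => ?_⟩
  · simp only [Set.image_union]
    refine hμ1 _ _ ?_
    rw [Set.disjoint_left]
    rintro _ ⟨x, hx, rfl⟩ hB'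
    have : x ∈ π ⁻¹' (π '' B) := hB'
    rw [hpre B hB] at this
    exact Set.disjoint_left.1 hAB hx this
  · have := hμ2 (π '' A)
    simp only [hpre A hA] at this
    exact this

/-! ### Spaces `C(K)` with finite Cantor–Bendixson rank -/

open scoped ZeroAtInfty in
theorem c0_abs_le_norm {Γ : Type} [TopologicalSpace Γ] (f : C₀(Γ, ℝ)) (x : Γ) : |f x| ≤ ‖f‖ :=
  f.toBCF.norm_coe_le_norm x

open scoped ZeroAtInfty in
theorem c0_norm_le {Γ : Type} [TopologicalSpace Γ] (f : C₀(Γ, ℝ)) {C : ℝ} (hC : 0 ≤ C)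
    (h : ∀ x, |f x| ≤ C) : ‖f‖ ≤ C :=
  (BoundedContinuousFunction.norm_le (f := f.toBCF) hC).2 h

open scoped ZeroAtInfty in
theorem c0_finite {Γ : Type} [TopologicalSpace Γ] [DiscreteTopology Γ] (f : C₀(Γ, ℝ)) {ε : ℝ}
    (hε : 0 < ε) : {x | ε ≤ |f x|}.Finite := by
  have h := f.zero_at_infty'
  rw [Filter.cocompact_eq_cofinite, Metric.tendsto_nhds] at h
  have h1 := h ε hε
  rw [Filter.eventually_cofinite] at h1
  refine h1.subset fun x hx => ?_
  simpa using hx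

open scoped ZeroAtInfty in
/-- The element of `c₀(Γ)`, for discrete `Γ`, given by a function with finite superlevel sets. -/
def c0Mk {Γ : Type} [TopologicalSpace Γ] [DiscreteTopology Γ] (f : Γ → ℝ)
    (hf : ∀ ε > 0, {x | ε ≤ |f x|}.Finite) : C₀(Γ, ℝ) where
  toFun := f
  continuous_toFun := continuous_of_discreteTopology
  zero_at_infty' := by
    rw [Filter.cocompact_eq_cofinite, Metric.tendsto_nhds]
    intro ε hε
    rw [Filter.eventually_cofinite]
    refine (hf ε hε).subset fun x hx => ?_
    simpa using hx

open scoped ZeroAtInfty in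
/-- Composition with an injection of discrete spaces, as an operator between `c₀` spaces. -/
noncomputable def c0Comp {Γ Δ : Type} [TopologicalSpace Γ] [DiscreteTopology Γ] [TopologicalSpace Δ]
    [DiscreteTopology Δ] (e : Γ → Δ) (he : Function.Injective e) : C₀(Δ, ℝ) →L[ℝ] C₀(Γ, ℝ) :=
  LinearMap.mkContinuous
    { toFun := fun f => c0Mk (fun x => f (e x)) fun ε hε =>
        Set.Finite.preimage (s := {x | ε ≤ |f x|}) (f := e) he.injOn (c0_finite f hε)
      map_add' := fun _ _ => rfl
      map_smul' := fun _ _ => rfl } 1 fun f => by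
    rw [one_mul]
    exact c0_norm_le _ (norm_nonneg _) fun x => c0_abs_le_norm f (e x)

open scoped ZeroAtInfty in
theorem c0_congr {Γ Δ : Type} [TopologicalSpace Γ] [DiscreteTopology Γ] [TopologicalSpace Δ]
    [DiscreteTopology Δ] (e : Γ ≃ Δ) : Nonempty (C₀(Δ, ℝ) ≃L[ℝ] C₀(Γ, ℝ)) :=
  ⟨ContinuousLinearEquiv.equivOfInverse (c0Comp e e.injective) (c0Comp e.symm e.symm.injective)
    (fun f => by ext x; exact congrArg f (e.apply_symm_apply x))
    (fun f => by ext x; exact congrArg f (e.symm_apply_apply x))⟩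

open scoped ZeroAtInfty in
theorem c0_sum {Γ Δ : Type} [TopologicalSpace Γ] [DiscreteTopology Γ] [TopologicalSpace Δ]
    [DiscreteTopology Δ] : Nonempty (C₀(Γ ⊕ Δ, ℝ) ≃L[ℝ] C₀(Γ, ℝ) × C₀(Δ, ℝ)) := by
  refine ⟨ContinuousLinearEquiv.ofBijective
    ((c0Comp Sum.inl Sum.inl_injective).prod (c0Comp Sum.inr Sum.inr_injective)) ?_ ?_⟩
  · rw [LinearMap.ker_eq_bot']
    intro f hf
    have h1 := congrArg Prod.fst hf
    have h2 := congrArg Prod.snd hf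
    ext x
    rcases x with x | x
    · exact DFunLike.congr_fun h1 x
    · exact DFunLike.congr_fun h2 x
  · rw [LinearMap.range_eq_top]
    rintro ⟨a, b⟩
    refine ⟨c0Mk (Sum.elim a b) fun ε hε => ?_, ?_⟩
    · refine (((c0_finite a hε).image Sum.inl).union ((c0_finite b hε).image Sum.inr)).subset ?_
      rintro (x | x) hx
      · exact Or.inl ⟨x, hx, rfl⟩
      · exact Or.inr ⟨x, hx, rfl⟩
    · rfl

/-- The finite levels of the Cantor–Bendixson derivation: `cbDeriv K n` is the `n`-th iterated
derived set of `K`. -/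
def cbDeriv (K : Type) [TopologicalSpace K] : ℕ → Set K
  | 0 => Set.univ
  | n + 1 => derivedSet (cbDeriv K n)

theorem cbDeriv_subtype (K : Type) [TopologicalSpace K] (n : ℕ)
    (y : derivedSet (Set.univ : Set K)) (hy : y ∈ cbDeriv (derivedSet (Set.univ : Set K)) n) :
    (y : K) ∈ cbDeriv K (n + 1) := by
  induction n generalizing y with
  | zero => exact y.2
  | succ n ih =>
    have h1 := continuous_subtype_val.image_derivedSet
      (A := cbDeriv (derivedSet (Set.univ : Set K)) n) Subtype.val_injective ⟨y, hy, rfl⟩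
    refine derivedSet_mono _ _ ?_ h1
    rintro _ ⟨z, hz, rfl⟩
    exact ih z hz

theorem isOpen_singleton_of_notMem_derivedSet {K : Type} [TopologicalSpace K] {x : K}
    (hx : x ∉ derivedSet (Set.univ : Set K)) : IsOpen ({x} : Set K) := by
  rw [isOpen_singleton_iff_punctured_nhds]
  rw [mem_derivedSet, AccPt, Filter.principal_univ, inf_top_eq, Filter.not_neBot] at hx
  exact hx

/-- A nearest point map onto the derived set is continuous, since the complement consists of isolated
points and on the derived set the map is the identity. -/
theorem exists_retraction {K : Type} [MetricSpace K] [CompactSpace K]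
    (hne : (derivedSet (Set.univ : Set K)).Nonempty) :
    ∃ r : ContinuousMap K (derivedSet (Set.univ : Set K)), ∀ x : derivedSet (Set.univ : Set K),
      r x = x := by
  set D := derivedSet (Set.univ : Set K)
  have hcl : IsClosed D := isClosed_derivedSet _
  have hex : ∀ x, ∃ y : D, Metric.infDist x D = dist x y := fun x => by
    obtain ⟨y, hy, h⟩ := hcl.isCompact.exists_infDist_eq_dist hne x
    exact ⟨⟨y, hy⟩, h⟩
  choose r hr using hex
  have hrD : ∀ x : D, r x = x := by
    intro x
    have h1 := hr x
    rw [Metric.infDist_zero_of_mem x.2] at h1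
    exact Subtype.ext (dist_eq_zero.1 h1.symm).symm
  refine ⟨⟨r, continuous_iff_continuousAt.2 fun x => ?_⟩, hrD⟩
  by_cases hx : x ∈ D
  · rw [Metric.continuousAt_iff]
    intro ε hε
    refine ⟨ε / 2, by linarith, fun {y} hy => ?_⟩
    rw [hrD ⟨x, hx⟩, Subtype.dist_eq]
    have h1 : dist y (r y) ≤ dist y x := by rw [← hr y]; exact Metric.infDist_le_dist_of_mem hx
    have h2 := dist_triangle (r y : K) y x
    rw [dist_comm (r y : K) y] at h2
    simp only
    linarith
  · have := isOpen_singleton_of_notMem_derivedSet hx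
    rw [ContinuousAt, (isOpen_singleton_iff_nhds_eq_pure x).1 this]
    exact tendsto_pure_nhds _ _

open scoped ZeroAtInfty in
/-- `C(K) ≃ C(K') ⊕ c₀(Γ)`, with `Γ` the set of isolated points of `K`. With a retraction `r` onto
the derived set `K'`, the isomorphism is `f ↦ (f|K', (f - f ∘ r)|Γ)`. -/
theorem exists_splitting {K : Type} [MetricSpace K] [CompactSpace K]
    (hne : (derivedSet (Set.univ : Set K)).Nonempty) :
    ∃ (Γ : Type) (_ : TopologicalSpace Γ) (_ : DiscreteTopology Γ) (_ : Countable Γ),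
      Nonempty (ContinuousMap K ℝ ≃L[ℝ]
        ContinuousMap (derivedSet (Set.univ : Set K)) ℝ × C₀(Γ, ℝ)) := by
  have hret := exists_retraction hne
  set D := derivedSet (Set.univ : Set K) with hD
  obtain ⟨r, hr⟩ := hret
  have hcl : IsClosed D := isClosed_derivedSet _
  have : CompactSpace D := isCompact_iff_compactSpace.1 hcl.isCompact
  let Γ := {x : K // x ∉ D}
  have hdisc : DiscreteTopology Γ := by
    rw [discreteTopology_iff_isOpen_singleton]
    intro x
    refine ⟨{x.1}, isOpen_singleton_of_notMem_derivedSet x.2, ?_⟩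
    ext y; simp [Subtype.ext_iff]
  have hfinite : ∀ h : ContinuousMap K ℝ, (∀ x ∈ D, h x = 0) → ∀ ε > 0,
      {x : Γ | ε ≤ |h x.1|}.Finite := by
    intro h h0 ε hε
    have hc : IsCompact {x : K | ε ≤ |h x|} :=
      (isClosed_le continuous_const (by fun_prop)).isCompact
    rw [← isCompact_iff_finite,
      Topology.IsInducing.isCompact_iff (f := (Subtype.val : Γ → K)) ⟨rfl⟩]
    convert hc using 1
    ext x
    simp only [Set.mem_image, Set.mem_ofPred_eq]
    constructor
    · rintro ⟨y, hy, rfl⟩; exact hy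
    · intro hx
      refine ⟨⟨x, fun hxD => ?_⟩, hx, rfl⟩
      rw [h0 x hxD, abs_zero] at hx
      linarith
  have hvan : ∀ f : ContinuousMap K ℝ, ∀ x ∈ D,
      (f - f.comp ((⟨Subtype.val, continuous_subtype_val⟩ : C(D, K)).comp r)) x = 0 := by
    intro f x hx
    have := hr ⟨x, hx⟩
    simp only at this
    simp [this]
  let T : ContinuousMap K ℝ →L[ℝ] C₀(Γ, ℝ) := LinearMap.mkContinuous
    { toFun := fun f => c0Mk (fun x : Γ => f x - f (r x)) (hfinite _ (hvan f))
      map_add' := fun f g => by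
        ext x
        change (f x + g x) - (f (r x) + g (r x)) = (f x - f (r x)) + (g x - g (r x))
        ring
      map_smul' := fun c f => by
        ext x
        change (c * f x) - (c * f (r x)) = c * (f x - f (r x))
        ring } 2 fun f => by
    refine c0_norm_le _ (by positivity) fun x => ?_
    have h1 := f.norm_coe_le_norm x
    have h2 := f.norm_coe_le_norm (r x)
    calc |f x - f (r x)| ≤ |f x| + |f (r x)| := abs_sub _ _
      _ ≤ 2 * ‖f‖ := by rw [Real.norm_eq_abs] at h1 h2; linarith
  let R : ContinuousMap K ℝ →L[ℝ] ContinuousMap D ℝ :=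
    LinearMap.mkContinuous
      { toFun := fun f => f.restrict D
        map_add' := fun _ _ => rfl
        map_smul' := fun _ _ => rfl } 1 fun f => by
      rw [one_mul]
      exact (ContinuousMap.norm_le _ (norm_nonneg _)).2 fun x => f.norm_coe_le_norm x
  refine ⟨Γ, inferInstance, hdisc, TopologicalSpace.separableSpace_iff_countable.1 inferInstance,
    ⟨ContinuousLinearEquiv.ofBijective (R.prod T) ?_ ?_⟩⟩
  · rw [LinearMap.ker_eq_bot']
    intro f hf
    have h1 : ∀ x : D, f x = 0 := fun x => DFunLike.congr_fun (congrArg Prod.fst hf) x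
    have h2 : ∀ x : Γ, f x - f (r x) = 0 := fun x => DFunLike.congr_fun (congrArg Prod.snd hf) x
    ext x
    by_cases hx : x ∈ D
    · exact h1 ⟨x, hx⟩
    · have := h2 ⟨x, hx⟩
      rw [h1 (r x), sub_zero] at this
      exact this
  · rw [LinearMap.range_eq_top]
    rintro ⟨a, b⟩
    classical
    let b' : K → ℝ := fun x => if hx : x ∈ D then 0 else b ⟨x, hx⟩
    have hb' : Continuous b' := by
      refine continuous_iff_continuousAt.2 fun x => ?_
      by_cases hx : x ∈ D
      · rw [ContinuousAt, Metric.tendsto_nhds]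
        intro ε hε
        have hfin := (c0_finite b hε).image Subtype.val
        have hopen : ((Subtype.val '' {x : Γ | ε ≤ |b x|})ᶜ : Set K) ∈ nhds x := by
          refine hfin.isClosed.isOpen_compl.mem_nhds ?_
          rintro ⟨y, _, rfl⟩
          exact y.2 hx
        filter_upwards [hopen] with y hy
        have : b' x = 0 := by simp [b', hx]
        rw [this, Real.dist_0_eq_abs]
        by_cases hyD : y ∈ D
        · simpa [b', hyD] using hε
        · simp only [b', hyD, dite_false]
          by_contra hc
          exact hy ⟨⟨y, hyD⟩, not_lt.1 hc, rfl⟩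
      · have := isOpen_singleton_of_notMem_derivedSet hx
        rw [ContinuousAt, (isOpen_singleton_iff_nhds_eq_pure x).1 this]
        exact tendsto_pure_nhds _ _
    refine ⟨a.comp r + ⟨b', hb'⟩, Prod.ext ?_ ?_⟩
    · ext x
      change a (r x) + b' x = a x
      rw [hr]
      simp [b']
    · ext x
      change (a (r x) + b' x) - (a (r (r x)) + b' (r x)) = b x
      rw [hr]
      have h1 : b' x = b x := by simp [b', x.2]
      have h2 : b' (r x) = 0 := by simp [b']
      rw [h1, h2]; ring

open scoped ZeroAtInfty in
theorem exists_c0_of_derivedSet_eq_empty {K : Type} [MetricSpace K] [CompactSpace K]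
    (h : derivedSet (Set.univ : Set K) = ∅) :
    ∃ (Γ : Type) (_ : TopologicalSpace Γ) (_ : DiscreteTopology Γ) (_ : Countable Γ),
      Nonempty (ContinuousMap K ℝ ≃L[ℝ] C₀(Γ, ℝ)) := by
  have hdisc : DiscreteTopology K := by
    rw [discreteTopology_iff_isOpen_singleton]
    intro x
    exact isOpen_singleton_of_notMem_derivedSet (by rw [h]; exact Set.notMem_empty x)
  have hfin : Finite K := finite_of_compact_of_discrete
  let T : ContinuousMap K ℝ →L[ℝ] C₀(K, ℝ) := LinearMap.mkContinuous
    { toFun := fun f => c0Mk f fun _ _ => Set.toFinite _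
      map_add' := fun f g => rfl
      map_smul' := fun c f => rfl } 1 fun f => by
    rw [one_mul]
    exact c0_norm_le _ (norm_nonneg _) fun x => f.norm_coe_le_norm x
  refine ⟨K, inferInstance, hdisc, inferInstance, ⟨ContinuousLinearEquiv.ofBijective T ?_ ?_⟩⟩
  · rw [LinearMap.ker_eq_bot']
    intro f hf
    ext x
    exact DFunLike.congr_fun hf x
  · rw [LinearMap.range_eq_top]
    intro b
    exact ⟨b.toContinuousMap, rfl⟩

open scoped ZeroAtInfty in
theorem exists_c0_of_cbDeriv_eq_empty (n : ℕ) : ∀ (K : Type) [MetricSpace K] [CompactSpace K],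
    cbDeriv K n = ∅ →
    ∃ (Γ : Type) (_ : TopologicalSpace Γ) (_ : DiscreteTopology Γ) (_ : Countable Γ),
      Nonempty (ContinuousMap K ℝ ≃L[ℝ] C₀(Γ, ℝ)) := by
  induction n with
  | zero =>
    intro K _ _ h
    refine exists_c0_of_derivedSet_eq_empty (Set.eq_empty_of_forall_notMem fun x _ => ?_)
    have : x ∈ cbDeriv K 0 := Set.mem_univ x
    rw [h] at this
    exact this
  | succ n ih =>
    intro K _ _ h
    rcases (derivedSet (Set.univ : Set K)).eq_empty_or_nonempty with h0 | hne
    · exact exists_c0_of_derivedSet_eq_empty h0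
    obtain ⟨Γ, _, _, _, ⟨e⟩⟩ := exists_splitting hne
    have : CompactSpace (derivedSet (Set.univ : Set K)) :=
      isCompact_iff_compactSpace.1 (isClosed_derivedSet _).isCompact
    obtain ⟨Δ, _, _, _, ⟨e'⟩⟩ := ih (derivedSet (Set.univ : Set K))
      (Set.eq_empty_of_forall_notMem fun y hy => by
        have := cbDeriv_subtype K n y hy
        rw [h] at this
        exact this)
    obtain ⟨e''⟩ := c0_sum (Γ := Δ) (Δ := Γ)
    exact ⟨Δ ⊕ Γ, inferInstance, inferInstance, inferInstance,
      ⟨(e.trans (e'.prodCongr (ContinuousLinearEquiv.refl ℝ _))).trans e''.symm⟩⟩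

theorem cbDeriv_nonempty (K : Type) [MetricSpace K] [CompactSpace K]
    (hinf : ¬ FiniteDimensional ℝ (ContinuousMap K ℝ))
    (hniso : IsEmpty (ContinuousMap K ℝ ≃L[ℝ] ZeroAtInftyContinuousMap ℕ ℝ)) (n : ℕ) :
    (cbDeriv K n).Nonempty := by
  rw [Set.nonempty_iff_ne_empty]
  intro h
  obtain ⟨Γ, _, _, _, ⟨e⟩⟩ := exists_c0_of_cbDeriv_eq_empty n K h
  rcases finite_or_infinite Γ with hfin | hinfΓ
  · apply hinf
    let L : ContinuousMap K ℝ →ₗ[ℝ] (Γ → ℝ) :=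
      { toFun := fun f => e f
        map_add' := fun f g => by rw [map_add]; rfl
        map_smul' := fun c f => by rw [map_smul]; rfl }
    refine FiniteDimensional.of_injective L fun f g hfg => e.injective ?_
    exact DFunLike.coe_injective hfg
  · obtain ⟨_⟩ := nonempty_denumerable Γ
    obtain ⟨e'⟩ := c0_congr (Denumerable.eqv Γ).symm
    exact hniso.false (e.trans e')

/-! ### Failure of the `ω₁`-SVM property -/

/-- On the countable algebra of finite and cofinite subsets of a countably infinite set, stability
of vector measures forces every almost additive function of finite sets to be uniformly close to
an additive one: put `ν A = g A` for finite `A` and `ν A = - g Aᶜ` for cofinite `A`. -/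
theorem exists_additive_near {α X : Type} [Countable α] [Infinite α] [NormedAddCommGroup X] (v : ℝ)
    (hv : ∀ (Ω : Type) (F : Set (Set Ω)), IsSetAlg F → F.Countable →
        ∀ ν : Set Ω → X, OneAdd F ν →
          ∃ μ : Set Ω → X, VectMeas F μ ∧ ∀ A ∈ F, ‖ν A - μ A‖ ≤ v)
    [DecidableEq α] (g : Finset α → X)
    (hg : ∀ A B, Disjoint A B → ‖g (A ∪ B) - g A - g B‖ ≤ 1) :
    ∃ h : α → X, ∀ A, ‖g A - ∑ t ∈ A, h t‖ ≤ v := by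
  classical
  let F : Set (Set α) := Set.range (fun s : Finset α => (s : Set α)) ∪
    Set.range (fun s : Finset α => (s : Set α)ᶜ)
  have hFin : ∀ s : Finset α, (s : Set α) ∈ F := fun s => Or.inl ⟨s, rfl⟩
  have hCof : ∀ s : Finset α, (s : Set α)ᶜ ∈ F := fun s => Or.inr ⟨s, rfl⟩
  have e1 : ∀ s t : Finset α, (s : Set α) ∪ (t : Set α)ᶜ = ((t \ s : Finset α) : Set α)ᶜ := by
    intro s t; ext x; simp; tauto
  have e2 : ∀ s t : Finset α, (s : Set α)ᶜ ∪ (t : Set α)ᶜ = ((s ∩ t : Finset α) : Set α)ᶜ := by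
    intro s t; ext x; simp; tauto
  have hF : IsSetAlg F := by
    refine ⟨by simpa using hFin ∅, ?_, ?_⟩
    · rintro A (⟨s, rfl⟩ | ⟨s, rfl⟩)
      · exact hCof s
      · simpa using hFin s
    · rintro A (⟨s, rfl⟩ | ⟨s, rfl⟩) B (⟨t, rfl⟩ | ⟨t, rfl⟩)
      · simpa using hFin (s ∪ t)
      · simpa only [e1] using hCof (t \ s)
      · have := hCof (s \ t)
        rwa [← e1, Set.union_comm] at this
      · simpa only [e2] using hCof (s ∩ t)
  have hFc : F.Countable := (Set.countable_range _).union (Set.countable_range _)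
  let fs : Set α → Finset α := fun A => if h : A.Finite then h.toFinset else ∅
  have hfs : ∀ s : Finset α, fs (s : Set α) = s := fun s => by simp [fs]
  let ν : Set α → X := fun A => if A.Finite then g (fs A) else - g (fs Aᶜ)
  have hν1 : ∀ s : Finset α, ν (s : Set α) = g s := fun s => by simp [ν, hfs]
  have hν2 : ∀ s : Finset α, ν (s : Set α)ᶜ = - g s := fun s => by
    have : ¬ ((s : Set α)ᶜ).Finite := s.finite_toSet.infinite_compl
    simp [ν, this, hfs]
  have mixed : ∀ s t : Finset α, Disjoint (s : Set α) (t : Set α)ᶜ →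
      ‖ν ((s : Set α) ∪ (t : Set α)ᶜ) - ν s - ν (t : Set α)ᶜ‖ ≤ 1 := by
    intro s t hd
    have hst : s ⊆ t := by
      rw [Set.disjoint_compl_right_iff_subset] at hd
      exact_mod_cast hd
    have := hg s (t \ s) Finset.disjoint_sdiff
    rw [Finset.union_sdiff_of_subset hst] at this
    rw [e1, hν1, hν2, hν2]
    convert this using 2
    abel
  have hν : OneAdd F ν := by
    rintro A (⟨s, rfl⟩ | ⟨s, rfl⟩) B (⟨t, rfl⟩ | ⟨t, rfl⟩) hd
    · have := hg s t (Finset.disjoint_coe.1 hd)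
      simp only [← Finset.coe_union, hν1]
      exact this
    · exact mixed s t hd
    · have := mixed t s hd.symm
      simp only at this ⊢
      rw [Set.union_comm, sub_right_comm]
      exact this
    · exfalso
      obtain ⟨x, hx⟩ := Infinite.exists_notMem_finset (s ∪ t)
      rw [Finset.mem_union, not_or] at hx
      exact Set.disjoint_left.1 hd (show x ∈ (s : Set α)ᶜ by simpa using hx.1) (by simpa using hx.2)
  obtain ⟨μ, hμ, hb⟩ := hv α F hF hFc ν hν
  have h0 : μ ∅ = 0 := by
    have := hμ ∅ hF.1 ∅ hF.1 (by simp)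
    simpa using this
  have hsum : ∀ A : Finset α, μ (A : Set α) = ∑ t ∈ A, μ {t} := by
    intro A
    induction A using Finset.induction_on with
    | empty => simpa using h0
    | insert a A ha ih =>
      have := hμ {a} (by simpa using hFin {a}) A (hFin A) (by simpa using ha)
      rw [Finset.sum_insert ha, Finset.coe_insert, Set.insert_eq, this, ih]
  refine ⟨fun t => μ {t}, fun A => ?_⟩
  rw [← hsum, ← hν1]
  exact hb _ (hFin A)

/-- A tree of bump functions on `K`, indexed by finite lists of naturals, the children of `s` being
`k :: s`. The bump `φ s` is supported in `V s` and equals `1` on `W s`; the supports of the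
children of `s` are pairwise disjoint and contained in `W s`. Down to level `n` the tree is
nondegenerate: each `s` has a centre `c s ∈ W s`, which is the limit of the centres of its
children. Below level `n` nothing prevents `V s` from being empty. -/
structure BumpTree (K : Type) [TopologicalSpace K] (n : ℕ) where
  c : List ℕ → K
  V : List ℕ → Set K
  W : List ℕ → Set K
  φ : List ℕ → ContinuousMap K ℝ
  W_subset : ∀ s, W s ⊆ V s
  child_subset : ∀ s k, V (k :: s) ⊆ W s
  child_disjoint : ∀ s j k y, y ∈ V (j :: s) → y ∈ V (k :: s) → j = k
  abs_le : ∀ s y, |φ s y| ≤ 1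
  eq_zero : ∀ s, ∀ y ∉ V s, φ s y = 0
  eq_one : ∀ s, ∀ y ∈ W s, φ s y = 1
  c_mem : ∀ s, s.length ≤ n → c s ∈ W s
  tendsto : ∀ s, s.length < n →
    Filter.Tendsto (fun k => c (k :: s)) Filter.atTop (nhds (c s))

/-- Around an accumulation point `x` of `A` there are disjoint balls centred in `A` whose centres
converge to `x`. The centres `u k` satisfy `d (u (k + 1)) x < d (u k) x / 2`, the radii are
`d (u k) x / 4`, so the balls lie in disjoint annuli around `x`. -/
theorem exists_disjoint_balls {K : Type} [MetricSpace K] {A : Set K} {x : K}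
    (hx : x ∈ derivedSet A) {r : ℝ} (hr : 0 < r) :
    ∃ (u : ℕ → K) (ρ : ℕ → ℝ), (∀ k, u k ∈ A) ∧ (∀ k, 0 < ρ k) ∧
      (∀ k, Metric.ball (u k) (ρ k) ⊆ Metric.ball x (r / 2)) ∧
      (∀ j k y, y ∈ Metric.ball (u j) (ρ j) → y ∈ Metric.ball (u k) (ρ k) → j = k) ∧
      Filter.Tendsto u Filter.atTop (nhds x) := by
  have : Nonempty K := ⟨x⟩
  have hstep : ∀ δ > 0, ∃ y ∈ A, 0 < dist y x ∧ dist y x < δ := by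
    intro δ hδ
    rw [mem_derivedSet, accPt_iff_nhds] at hx
    obtain ⟨y, hy, hne⟩ := hx (Metric.ball x δ) (Metric.ball_mem_nhds x hδ)
    exact ⟨y, hy.2, dist_pos.2 hne, hy.1⟩
  choose! next hA hpos hlt using hstep
  let u : ℕ → K := fun k => Nat.rec (next (r / 4)) (fun _ y => next (dist y x / 2)) k
  have hu0 : u 0 = next (r / 4) := rfl
  have hus : ∀ k, u (k + 1) = next (dist (u k) x / 2) := fun _ => rfl
  have hupos : ∀ k, 0 < dist (u k) x := by
    intro k
    induction k with
    | zero => rw [hu0]; exact hpos _ (by positivity)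
    | succ k ih => rw [hus]; exact hpos _ (by positivity)
  have huA : ∀ k, u k ∈ A := by
    intro k
    cases k with
    | zero => rw [hu0]; exact hA _ (by positivity)
    | succ k => rw [hus]; exact hA _ (by have := hupos k; positivity)
  have hlt' : ∀ k, dist (u (k + 1)) x < dist (u k) x / 2 := by
    intro k
    rw [hus]; exact hlt _ (by have := hupos k; positivity)
  have hgeo : ∀ k, dist (u k) x ≤ r / 4 * (1 / 2) ^ k := by
    intro k
    induction k with
    | zero => rw [hu0]; simpa using (hlt (r / 4) (by positivity)).le
    | succ k ih => rw [pow_succ]; linarith [hlt' k]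
  have hle : ∀ k, dist (u k) x ≤ r / 4 := by
    intro k
    refine (hgeo k).trans ?_
    have : (1 / 2 : ℝ) ^ k ≤ 1 := pow_le_one₀ (by norm_num) (by norm_num)
    nlinarith
  have hanti : ∀ j k, j < k → dist (u k) x < dist (u j) x / 2 := by
    intro j k hjk
    induction k, hjk using Nat.le_induction with
    | base => exact hlt' j
    | succ k _ ih => linarith [hlt' k, hupos k]
  refine ⟨u, fun k => dist (u k) x / 4, huA, fun k => by have := hupos k; positivity, ?_, ?_, ?_⟩
  · intro k y hy
    rw [Metric.mem_ball] at *
    linarith [dist_triangle y (u k) x, hle k]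
  · have key : ∀ j k y, j < k → y ∈ Metric.ball (u j) (dist (u j) x / 4) →
        y ∈ Metric.ball (u k) (dist (u k) x / 4) → False := by
      intro j k y hjk h1 h2
      rw [Metric.mem_ball] at *
      have := dist_triangle y (u k) x
      have := dist_triangle_left (u j) x y
      linarith [hanti j k hjk, hupos k]
    intro j k y h1 h2
    rcases lt_trichotomy j k with h | h | h
    · exact (key j k y h h1 h2).elim
    · exact h
    · exact (key k j y h h2 h1).elim
  · rw [tendsto_iff_dist_tendsto_zero]
    refine squeeze_zero (fun _ => dist_nonneg) hgeo ?_
    have := (tendsto_pow_atTop_nhds_zero_of_lt_one (r := (1 / 2 : ℝ)) (by norm_num)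
      (by norm_num)).const_mul (r / 4)
    simpa using this

/-- The centres at level `i` of the tree are taken in the derived set of order `n - i`. -/
theorem exists_bumpTree (K : Type) [MetricSpace K] (n : ℕ)
    (hne : (cbDeriv K n).Nonempty) : Nonempty (BumpTree K n) := by
  classical
  obtain ⟨x₀, hx₀⟩ := hne
  -- A node is a pair (centre, radius); when a centre of positive derivative order is not
  -- available, the children get radius `0`, that is, empty balls.
  have hstep : ∀ (m : ℕ) (p : K × ℝ), ∃ q : ℕ → K × ℝ,
      (∀ k, Metric.ball (q k).1 (q k).2 ⊆ Metric.ball p.1 (p.2 / 2)) ∧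
      (∀ j k y, y ∈ Metric.ball (q j).1 (q j).2 → y ∈ Metric.ball (q k).1 (q k).2 → j = k) ∧
      (p.1 ∈ cbDeriv K (m + 1) → 0 < p.2 →
        (∀ k, (q k).1 ∈ cbDeriv K m ∧ 0 < (q k).2) ∧
        Filter.Tendsto (fun k => (q k).1) Filter.atTop (nhds p.1)) ∧ ∀ k, 0 ≤ (q k).2 := by
    intro m p
    by_cases hp : p.1 ∈ cbDeriv K (m + 1) ∧ 0 < p.2
    · obtain ⟨u, ρ, h1, h2, h3, h4, h5⟩ := exists_disjoint_balls (A := cbDeriv K m) hp.1 hp.2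
      exact ⟨fun k => (u k, ρ k), h3, h4, fun _ _ => ⟨fun k => ⟨h1 k, h2 k⟩, h5⟩,
        fun k => (h2 k).le⟩
    · refine ⟨fun _ => (x₀, 0), ?_, ?_, fun h1 h2 => (hp ⟨h1, h2⟩).elim, fun _ => le_rfl⟩
      · intro k; simp
      · intro j k y h; simp at h
  choose step hsub hdisj hgood hnonneg using hstep
  let node : List ℕ → K × ℝ := fun s =>
    List.rec (x₀, 1) (fun k t p => step (n - t.length - 1) p k) s
  have hnode : ∀ k t, node (k :: t) = step (n - t.length - 1) (node t) k := fun _ _ => rfl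
  have hr0 : ∀ s, 0 ≤ (node s).2 := by
    intro s
    cases s with
    | nil => exact zero_le_one
    | cons k t => exact hnonneg _ _ _
  have hinv : ∀ s : List ℕ, s.length ≤ n →
      (node s).1 ∈ cbDeriv K (n - s.length) ∧ 0 < (node s).2 := by
    intro s
    induction s with
    | nil => intro _; exact ⟨hx₀, one_pos⟩
    | cons k t ih =>
      intro hs
      rw [List.length_cons] at hs
      obtain ⟨h1, h2⟩ := ih (by omega)
      rw [hnode, List.length_cons, ← Nat.sub_sub]
      refine (hgood _ _ ?_ h2).1 k
      rwa [show n - t.length - 1 + 1 = n - t.length by omega]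
  refine ⟨{
    c := fun s => (node s).1
    V := fun s => Metric.ball (node s).1 (node s).2
    W := fun s => Metric.ball (node s).1 ((node s).2 / 2)
    -- for radius `0` the quotient is `0` by convention, as required for `V s = ∅`
    φ := fun s => ⟨fun y => max 0 (min 1 ((2 * (node s).2 - 2 * dist y (node s).1) / (node s).2)),
      by fun_prop⟩
    W_subset := fun s => Metric.ball_subset_ball (by linarith [hr0 s])
    child_subset := fun s k => hsub _ _ k
    child_disjoint := fun s => hdisj _ _
    abs_le := fun s y => ?_
    eq_zero := fun s y hy => ?_
    eq_one := fun s y hy => ?_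
    c_mem := fun s hs => Metric.mem_ball_self (half_pos (hinv s hs).2)
    tendsto := fun s hs => ?_ }⟩
  · simp only [ContinuousMap.coe_mk]
    rw [abs_of_nonneg (le_max_left _ _)]
    exact max_le zero_le_one (min_le_left _ _)
  · simp only [ContinuousMap.coe_mk]
    rw [Metric.mem_ball, not_lt] at hy
    refine max_eq_left ((min_le_right _ _).trans ?_)
    exact div_nonpos_of_nonpos_of_nonneg (by linarith) (hr0 s)
  · simp only [ContinuousMap.coe_mk]
    rw [Metric.mem_ball] at hy
    have hpos : 0 < (node s).2 := by linarith [dist_nonneg (x := y) (y := (node s).1)]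
    rw [min_eq_left, max_eq_right zero_le_one]
    rw [le_div_iff₀ hpos]
    linarith
  · obtain ⟨h1, h2⟩ := hinv s hs.le
    refine (hgood (n - s.length - 1) (node s) ?_ h2).2
    rwa [show n - s.length - 1 + 1 = n - s.length by omega]

namespace BumpTree

variable {K : Type} [TopologicalSpace K] {n : ℕ} (T : BumpTree K n)

theorem V_anti {s t : List ℕ} (h : s <:+ t) : T.V t ⊆ T.V s := by
  obtain ⟨l, rfl⟩ := h
  induction l with
  | nil => exact subset_rfl
  | cons k l ih => exact ((T.child_subset _ k).trans (T.W_subset _)).trans ih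

theorem W_anti {s t : List ℕ} (h : s <:+ t) : T.W t ⊆ T.W s := by
  obtain ⟨l, rfl⟩ := h
  induction l with
  | nil => exact subset_rfl
  | cons k l ih => exact ((T.W_subset _).trans (T.child_subset _ k)).trans ih

theorem comparable {y : K} (a : List ℕ) {b : List ℕ} (ha : y ∈ T.V a) (hb : y ∈ T.V b) :
    a <:+ b ∨ b <:+ a := by
  induction a with
  | nil => exact Or.inl List.nil_suffix
  | cons j a ih =>
    rcases ih (T.V_anti (List.suffix_cons j a) ha) with ⟨l, rfl⟩ | h
    · rcases List.eq_nil_or_concat' l with rfl | ⟨l, i, rfl⟩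
      · exact Or.inr (List.suffix_cons j a)
      · have hs : i :: a <:+ (l ++ [i]) ++ a := ⟨l, by simp⟩
        obtain rfl := T.child_disjoint a i j y (T.V_anti hs hb) ha
        exact Or.inl hs
    · exact Or.inr (h.trans (List.suffix_cons j a))

/-- The alternating sum of the first `M` children of the nodes in `A`. -/
noncomputable def altSum (A : Finset (List ℕ)) (M : ℕ) : ContinuousMap K ℝ :=
  ∑ s ∈ A, ∑ k ∈ Finset.range M, ((-1 : ℝ) ^ k) • T.φ (k :: s)

/-- A number exceeding all entries of the lists in `A`. -/
def cutoff (A : Finset (List ℕ)) : ℕ := A.sup fun s => s.sum + 1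

theorem lt_cutoff {A : Finset (List ℕ)} {s : List ℕ} (hs : s ∈ A) {k : ℕ} (hk : k ∈ s) :
    k < cutoff A := by
  have h1 := List.le_sum_of_mem hk
  have h2 : s.sum + 1 ≤ cutoff A := Finset.le_sup (f := fun s : List ℕ => s.sum + 1) hs
  omega

/-- Beyond the cutoff the children of the nodes in `A` have pairwise disjoint supports: if
`k :: s` and `k' :: s'` are distinct and their supports meet, then one of them, say `k :: s`, is a
proper suffix of the other, so `k` is an entry of `s'`. Hence the remainder is at most `1`. -/
theorem norm_altSum_sub_le [CompactSpace K] (A : Finset (List ℕ)) {M : ℕ} (hM : cutoff A ≤ M) :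
    ‖T.altSum A M - T.altSum A (cutoff A)‖ ≤ 1 := by
  rw [ContinuousMap.norm_le _ zero_le_one]
  intro y
  have e : (T.altSum A M - T.altSum A (cutoff A)) y =
      ∑ p ∈ A ×ˢ Finset.Ico (cutoff A) M, (-1 : ℝ) ^ p.2 * T.φ (p.2 :: p.1) y := by
    rw [Finset.sum_product, altSum, altSum, ← Finset.sum_sub_distrib]
    simp only [← Finset.sum_Ico_eq_sub _ hM, ContinuousMap.sum_apply, ContinuousMap.smul_apply,
      smul_eq_mul]
  rw [e, Real.norm_eq_abs]
  by_cases h : ∃ p ∈ A ×ˢ Finset.Ico (cutoff A) M, y ∈ T.V (p.2 :: p.1)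
  · obtain ⟨⟨s, k⟩, hp, hy⟩ := h
    rw [Finset.mem_product, Finset.mem_Ico] at hp
    rw [Finset.sum_eq_single (s, k)]
    · rw [abs_mul, abs_pow, abs_neg, abs_one, one_pow, one_mul]
      exact T.abs_le _ _
    · rintro ⟨s', k'⟩ hp' hne
      rw [Finset.mem_product, Finset.mem_Ico] at hp'
      refine mul_eq_zero_of_right _ (T.eq_zero _ _ fun hy' => hne ?_)
      simp only at hp hp' hy hy'
      have proper : ∀ {a b : List ℕ} {i j : ℕ}, b ∈ A → cutoff A ≤ i → i :: a <:+ j :: b →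
          i :: a = j :: b := by
        intro a b i j hb hi hab
        rcases List.suffix_cons_iff.1 hab with h | h
        · exact h
        · have := lt_cutoff hb (h.subset List.mem_cons_self)
          omega
      rcases T.comparable _ hy hy' with h | h
      · have := proper hp'.1 hp.2.1 h
        simp only [List.cons.injEq] at this
        rw [this.1, this.2]
      · have := proper hp.1 hp'.2.1 h
        simp only [List.cons.injEq] at this
        rw [this.1, this.2]
    · intro hn
      exact (hn (by rw [Finset.mem_product, Finset.mem_Ico]; exact hp)).elim
  · push Not at h
    rw [Finset.sum_eq_zero fun p hp => mul_eq_zero_of_right _ (T.eq_zero _ _ (h p hp))]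
    simp

/-- The almost additive set function defeating every vector measure. -/
noncomputable def setFun (A : Finset (List ℕ)) : ContinuousMap K ℝ :=
  (1 / 2 : ℝ) • T.altSum A (cutoff A)

theorem norm_setFun_union_le [CompactSpace K] (A B : Finset (List ℕ)) (hAB : Disjoint A B) :
    ‖T.setFun (A ∪ B) - T.setFun A - T.setFun B‖ ≤ 1 := by
  have hA := T.norm_altSum_sub_le A
    (show cutoff A ≤ cutoff (A ∪ B) from Finset.sup_mono Finset.subset_union_left)
  have hB := T.norm_altSum_sub_le B
    (show cutoff B ≤ cutoff (A ∪ B) from Finset.sup_mono Finset.subset_union_right)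
  have e : T.setFun (A ∪ B) - T.setFun A - T.setFun B =
      (1 / 2 : ℝ) • ((T.altSum A (cutoff (A ∪ B)) - T.altSum A (cutoff A)) +
        (T.altSum B (cutoff (A ∪ B)) - T.altSum B (cutoff B))) := by
    have : T.altSum (A ∪ B) (cutoff (A ∪ B)) =
        T.altSum A (cutoff (A ∪ B)) + T.altSum B (cutoff (A ∪ B)) := Finset.sum_union hAB
    rw [setFun, this, setFun, setFun]
    module
  rw [e, norm_smul]
  have := norm_add_le (T.altSum A (cutoff (A ∪ B)) - T.altSum A (cutoff A))
    (T.altSum B (cutoff (A ∪ B)) - T.altSum B (cutoff B))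
  rw [Real.norm_of_nonneg (by norm_num)]
  linarith

/-- Given continuous functions `h t`, one can descend the tree to a node `s` of level `i` so that at
its centre each `h t` along the branch is not substantially positively correlated with the sign
`(-1) ^ k` of the child `k :: t` through which the branch leaves `t`: at every step the parity of
`k` is chosen against the sign of `h s (c s)`, and `k` so large that all earlier strict inequalities
persist. -/
theorem exists_branch (h : List ℕ → ContinuousMap K ℝ) (i : ℕ) (hi : i ≤ n) :
    ∃ s : List ℕ, s.length = i ∧ ∀ k t, k :: t <:+ s → (-1 : ℝ) ^ k * h t (T.c s) < 1 / 4 := by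
  have hopen : ∀ s : List ℕ,
      IsOpen {y | ∀ k t, k :: t <:+ s → (-1 : ℝ) ^ k * h t y < 1 / 4} := by
    intro s
    induction s with
    | nil => simp
    | cons j s ih =>
      have : {y | ∀ k t, k :: t <:+ j :: s → (-1 : ℝ) ^ k * h t y < 1 / 4} =
          {y | (-1 : ℝ) ^ j * h s y < 1 / 4} ∩
            {y | ∀ k t, k :: t <:+ s → (-1 : ℝ) ^ k * h t y < 1 / 4} := by
        ext y
        simp only [List.suffix_cons_iff, Set.mem_inter_iff, Set.mem_ofPred_eq, List.cons.injEq]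
        constructor
        · exact fun H => ⟨H j s (Or.inl ⟨rfl, rfl⟩), fun k t hk => H k t (Or.inr hk)⟩
        · rintro ⟨H1, H2⟩ k t (⟨rfl, rfl⟩ | hk)
          · exact H1
          · exact H2 k t hk
      rw [this]
      exact (isOpen_lt (by fun_prop) continuous_const).inter ih
  induction i with
  | zero => exact ⟨[], rfl, fun k t hk => by simp at hk⟩
  | succ i ih =>
    obtain ⟨s, hs, H⟩ := ih (by omega)
    have hev := (T.tendsto s (by omega)).eventually ((hopen s).mem_nhds H)
    obtain ⟨e, he⟩ : ∃ e : ℕ, (-1 : ℝ) ^ e * h s (T.c s) ≤ 0 := by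
      rcases le_total (h s (T.c s)) 0 with h0 | h0
      · exact ⟨0, by simpa using h0⟩
      · exact ⟨1, by simpa using h0⟩
    have hev2 : ∀ᶠ k in Filter.atTop, (-1 : ℝ) ^ e * h s (T.c (k :: s)) < 1 / 4 := by
      refine (T.tendsto s (by omega)).eventually
        ((isOpen_lt (f := fun y => (-1 : ℝ) ^ e * h s y) (by fun_prop)
          continuous_const).mem_nhds ?_)
      exact lt_of_le_of_lt he (by norm_num)
    obtain ⟨N, hN⟩ := Filter.eventually_atTop.1 (hev.and hev2)
    obtain ⟨h1, h2⟩ := hN (2 * N + e) (by omega)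
    refine ⟨(2 * N + e) :: s, by simp [hs], fun k t hk => ?_⟩
    rcases List.suffix_cons_iff.1 hk with hk | hk
    · simp only [List.cons.injEq] at hk
      rw [hk.1, hk.2, pow_add, pow_mul]
      simpa using h2
    · exact h1 k t hk

/-- The nodes which the branch of `s` leaves through a child whose index has parity `e`. -/
def chain (e : ℕ) : List ℕ → Finset (List ℕ)
  | [] => ∅
  | k :: t => if k % 2 = e then insert t (chain e t) else chain e t

theorem exists_of_mem_chain {e : ℕ} {s t : List ℕ} (ht : t ∈ chain e s) :
    ∃ k, k % 2 = e ∧ k :: t <:+ s := by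
  induction s with
  | nil => simp [chain] at ht
  | cons j s ih =>
    have key : t ∈ chain e s → ∃ k, k % 2 = e ∧ k :: t <:+ j :: s := fun h =>
      let ⟨k, hk, hs⟩ := ih h
      ⟨k, hk, hs.trans (List.suffix_cons j s)⟩
    rw [chain] at ht
    split_ifs at ht with hj
    · rcases Finset.mem_insert.1 ht with rfl | ht
      · exact ⟨j, hj, List.suffix_rfl⟩
      · exact key ht
    · exact key ht

theorem card_chain_add (s : List ℕ) : (chain 0 s).card + (chain 1 s).card = s.length := by
  induction s with
  | nil => simp [chain]
  | cons j s ih =>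
    have hn : ∀ e, s ∉ chain e s := fun e h => by
      obtain ⟨k, -, hk⟩ := exists_of_mem_chain h
      have := hk.length_le
      simp at this
    rcases Nat.mod_two_eq_zero_or_one j with h | h <;>
      simp [chain, h, Finset.card_insert_of_notMem (hn _)] <;> omega

/-- At the centre of the node `s` found by `exists_branch`, the set function takes on `chain e s`,
up to sign, a value at least `(card - 1) / 2`, whereas `∑ h t` is there, with the same sign, at most
`card / 4`. -/
theorem card_chain_le [CompactSpace K] (h : List ℕ → ContinuousMap K ℝ) (v : ℝ)
    (hv : ∀ A, ‖T.setFun A - ∑ t ∈ A, h t‖ ≤ v) (s : List ℕ) (hs : s.length ≤ n)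
    (H : ∀ k t, k :: t <:+ s → (-1 : ℝ) ^ k * h t (T.c s) < 1 / 4) (e : ℕ) :
    ((chain e s).card : ℝ) ≤ 4 * v + 2 := by
  set A := chain e s with hA
  set y := T.c s with hy
  have hyW : y ∈ T.W s := T.c_mem s hs
  have hpar : ∀ k, k % 2 = e → (-1 : ℝ) ^ k = (-1) ^ e := by
    intro k hk
    rw [← hk, neg_one_pow_eq_pow_mod_two]
  have hee : (-1 : ℝ) ^ e * (-1) ^ e = 1 := by rw [← mul_pow]; simp
  -- with all indices occurring in `s` included, every node of the chain contributes its sign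
  set M := max (cutoff A) (s.sum + 1) with hM
  have hfull : T.altSum A M y = (-1) ^ e * A.card := by
    have : ∀ t ∈ A, (∑ k ∈ Finset.range M, ((-1 : ℝ) ^ k) • T.φ (k :: t)) y = (-1) ^ e := by
      intro t ht
      obtain ⟨k, hk, hks⟩ := exists_of_mem_chain ht
      have hky : y ∈ T.W (k :: t) := T.W_anti hks hyW
      have hkM : k < M := by
        have := List.le_sum_of_mem (hks.subset List.mem_cons_self)
        omega
      rw [ContinuousMap.sum_apply, Finset.sum_eq_single k]
      · simp [T.eq_one _ _ hky, hpar k hk]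
      · intro j _ hj
        have : y ∉ T.V (j :: t) := fun h' =>
          hj (T.child_disjoint t j k y h' (T.W_subset _ hky))
        simp [T.eq_zero _ _ this]
      · intro hk'
        exact (hk' (Finset.mem_range.2 hkM)).elim
    rw [altSum, ContinuousMap.sum_apply, Finset.sum_congr rfl this]
    simp [mul_comm]
  have h1 : |T.altSum A M y - T.altSum A (cutoff A) y| ≤ 1 :=
    ((T.altSum A M - T.altSum A (cutoff A)).norm_coe_le_norm y).trans
      (T.norm_altSum_sub_le A (le_max_left _ _))
  have h2 : |1 / 2 * T.altSum A (cutoff A) y - ∑ t ∈ A, h t y| ≤ v := by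
    have := ((T.setFun A - ∑ t ∈ A, h t).norm_coe_le_norm y).trans (hv A)
    simpa [setFun, ContinuousMap.sum_apply] using this
  have h3 : (-1 : ℝ) ^ e * ∑ t ∈ A, h t y ≤ A.card * (1 / 4) := by
    rw [Finset.mul_sum, ← nsmul_eq_mul]
    refine Finset.sum_le_card_nsmul _ _ _ fun t ht => ?_
    obtain ⟨k, hk, hks⟩ := exists_of_mem_chain ht
    rw [← hpar k hk]
    exact (H k t hks).le
  have sgn : ∀ z : ℝ, (-1 : ℝ) ^ e * z ≤ |z| := fun z => by
    refine (le_abs_self _).trans ?_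
    rw [abs_mul, abs_pow, abs_neg, abs_one, one_pow, one_mul]
  have h1' := (sgn _).trans h1
  have h2' := (sgn _).trans h2
  rw [hfull, mul_sub, ← mul_assoc, hee] at h1'
  rw [mul_sub] at h2'
  linarith

end BumpTree

theorem not_countable_svm (K : Type) [MetricSpace K] [CompactSpace K]
    (hne : ∀ n, (cbDeriv K n).Nonempty) :
    ¬ ∃ v : ℝ, ∀ (Ω : Type) (F : Set (Set Ω)), IsSetAlg F → F.Countable →
        ∀ ν : Set Ω → ContinuousMap K ℝ, OneAdd F ν →
          ∃ μ : Set Ω → ContinuousMap K ℝ, VectMeas F μ ∧ ∀ A ∈ F, ‖ν A - μ A‖ ≤ v := by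
  rintro ⟨v, hv⟩
  obtain ⟨n, hn⟩ := exists_nat_gt (8 * v + 4)
  obtain ⟨T⟩ := exists_bumpTree K n (hne n)
  obtain ⟨h, hh⟩ := exists_additive_near v hv T.setFun T.norm_setFun_union_le
  obtain ⟨s, hs, H⟩ := T.exists_branch h n le_rfl
  have h0 := T.card_chain_le h v hh s hs.le H 0
  have h1 := T.card_chain_le h v hh s hs.le H 1
  have hcard : ((BumpTree.chain 0 s).card : ℝ) + (BumpTree.chain 1 s).card = n := by
    rw [← hs]
    exact_mod_cast BumpTree.card_chain_add s
  linarith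

/-- if Ω₀ is a compact metric space with C(Ω₀, ℝ)
infinite-dimensional and not isomorphic to c₀, then C(Ω₀, ℝ) has the ω-SVM
property but fails the ω₁-SVM property. -/
theorem stmt_10 (Ω₀ : Type) [MetricSpace Ω₀] [CompactSpace Ω₀]
    (hinf : ¬ FiniteDimensional ℝ (ContinuousMap Ω₀ ℝ))
    (hniso : IsEmpty (ContinuousMap Ω₀ ℝ ≃L[ℝ] ZeroAtInftyContinuousMap ℕ ℝ)) :
    (∃ v : ℝ, HasOmegaSVMBound (ContinuousMap Ω₀ ℝ) v) ∧
    ¬ ∃ v : ℝ, ∀ (Ω : Type) (F : Set (Set Ω)), IsSetAlg F → F.Countable →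
        ∀ ν : Set Ω → ContinuousMap Ω₀ ℝ, OneAdd F ν →
          ∃ μ : Set Ω → ContinuousMap Ω₀ ℝ, VectMeas F μ ∧ ∀ A ∈ F, ‖ν A - μ A‖ ≤ v := by
  exact ⟨⟨210, omega_svm Ω₀⟩, not_countable_svm Ω₀ (cbDeriv_nonempty Ω₀ hinf hniso)⟩
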